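/- There exists a constant C > 0 such that for every n ≥ 2, φ^0_{Λ_n^even}[h_0²] ≤ C · log n, where h_0 denotes the height at the origin. -/

import Mathlib

open scoped BigOperators

namespace SquareIce

/-- Vertices of the square lattice `ℤ²`. -/
abbrev V : Type := ℤ × ℤ

/-- Nearest-neighbour adjacency: Euclidean distance 1. -/
def adj (u v : V) : Prop := (u.1 - v.1).natAbs + (u.2 - v.2).natAbs = 1

/-- Diagonal (`×`) adjacency: Euclidean distance `√2`. -/
def xadj (u v : V) : Prop := (u.1 - v.1).natAbs = 1 ∧ (u.2 - v.2).natAbs = 1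

/-- `*`-adjacency: graph distance exactly 2 in `ℤ²`. -/
def starAdj (u v : V) : Prop := (u.1 - v.1).natAbs + (u.2 - v.2).natAbs = 2

/-- A vertex is even when the sum of its coordinates is even. -/
def IsEvenV (v : V) : Prop := Even (v.1 + v.2)

/-- Squared Euclidean distance between two vertices. -/
def distSq (u v : V) : ℤ := (u.1 - v.1) ^ 2 + (u.2 - v.2) ^ 2

/-- Sup-norm of a vertex. -/
def infNorm (v : V) : ℤ := max |v.1| |v.2|

/-- `h` is a height function on `D` (normalised to vanish outside `D`):
increments of absolute value one along edges of `D`, and even values on even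
vertices (equivalently, `h v` has the parity of `v.1 + v.2`). -/
def IsHeightFn (D : Set V) (h : V → ℤ) : Prop :=
  (∀ u v, u ∈ D → v ∈ D → adj u v → |h u - h v| = 1) ∧
  (∀ v ∈ D, Even (h v + v.1 + v.2)) ∧ (∀ v, v ∉ D → h v = 0)

/-- Boundary of `D`: vertices of `D` with a nearest neighbour outside `D`. -/
def bdry (D : Set V) : Set V := {v | v ∈ D ∧ ∃ u, u ∉ D ∧ adj u v}

/-- `A` and `B` are joined by a `rel`-path all of whose vertices lie in `S`. -/
def Connected (rel : V → V → Prop) (S A B : Set V) : Prop :=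
  ∃ p : List V, ∃ hp : p ≠ [], List.Chain' rel p ∧ (∀ v ∈ p, v ∈ S) ∧
    p.head hp ∈ A ∧ p.getLast hp ∈ B

/-- `S` is the vertex set of a closed `×`-path. -/
def IsXCircuit (S : Set V) : Prop :=
  ∃ p : List V, ∃ hp : p ≠ [], List.Chain' xadj p ∧ p.head hp = p.getLast hp ∧
    {v | v ∈ p} = S

/-- A domain: a finite set whose boundary is a `×`-circuit. -/
def IsDomain (D : Set V) : Prop := D.Finite ∧ IsXCircuit (bdry D)

/-- An even domain: a domain whose boundary consists of even vertices. -/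
def IsEvenDomain (D : Set V) : Prop := IsDomain D ∧ ∀ v ∈ bdry D, IsEvenV v

/-- Height functions on `D` whose value at every `v ∈ B` lies in `κ v`. -/
def HomSet (D B : Set V) (κ : V → Set ℤ) : Set (V → ℤ) :=
  {h | IsHeightFn D h ∧ ∀ v ∈ B, h v ∈ κ v}

/-- Height functions on `D` with prescribed boundary values `κ` on `∂D`. -/
def HomBC (D : Set V) (κ : V → ℤ) : Set (V → ℤ) :=
  {h | IsHeightFn D h ∧ ∀ v ∈ bdry D, h v = κ v}

/-- Height functions on `D` vanishing on `∂D`. -/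
def Hom0 (D : Set V) : Set (V → ℤ) := HomBC D (fun _ => 0)

/-- Probability of `A` under the uniform measure on the finite set `S`. -/
noncomputable def pr {α : Type*} (S A : Set α) : ℝ :=
  (Nat.card (S ∩ A : Set α) : ℝ) / (Nat.card S : ℝ)

/-- Expectation of `f` under the uniform measure on the finite set `S`. -/
noncomputable def expec {α : Type*} (S : Set α) (f : α → ℝ) : ℝ :=
  (∑ᶠ x ∈ S, f x) / (Nat.card S : ℝ)

/-- The box `Λ_{a,b} = ([-a,a] × [-b,b]) ∩ ℤ²`. -/
def Lam2 (a b : ℤ) : Set V := {v | |v.1| ≤ a ∧ |v.2| ≤ b}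

/-- The box `Λ_a`. -/
def Lam (a : ℤ) : Set V := Lam2 a a

def leftSide (a b : ℤ) : Set V := {v | v.1 = -a ∧ |v.2| ≤ b}
def rightSide (a b : ℤ) : Set V := {v | v.1 = a ∧ |v.2| ≤ b}
def topSide (a b : ℤ) : Set V := {v | |v.1| ≤ a ∧ v.2 = b}
def botSide (a b : ℤ) : Set V := {v | |v.1| ≤ a ∧ v.2 = -b}

/-- Horizontal crossing of `Λ_{a,b}` by a `rel`-path of vertices satisfying `P`. -/
def HCross (rel : V → V → Prop) (a b : ℤ) (P : V → Prop) : Prop :=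
  Connected rel {v | v ∈ Lam2 a b ∧ P v} (leftSide a b) (rightSide a b)

/-- Vertical crossing of `Λ_{a,b}` by a `rel`-path of vertices satisfying `P`. -/
def VCross (rel : V → V → Prop) (a b : ℤ) (P : V → Prop) : Prop :=
  Connected rel {v | v ∈ Lam2 a b ∧ P v} (topSide a b) (botSide a b)

/-- `F` is increasing with respect to the pointwise order on `D`. -/
def IncreasingOn (D : Set V) (F : (V → ℤ) → ℝ) : Prop :=
  ∀ h h' : V → ℤ, (∀ v ∈ D, h v ≤ h' v) → F h ≤ F h'

/-- The even box `Λ_m^even`: everything inside or on the even `×`-circuit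
surrounding the origin contained in `Λ_{m+1} ∖ Λ_{m-1}`. -/
def LamEven (m : ℤ) : Set V := Lam m ∪ {v | infNorm v = m + 1 ∧ IsEvenV v}

/-- A quad: a domain `D` together with an enumeration `p` of its boundary
`×`-circuit (closed: first vertex repeated at the end) and marked points
`a = p[0]`, `b = p[ib]`, `c = p[ic]`, `d = p[idx]` in cyclic order. -/
structure Quad where
  D : Set V
  p : List V
  hp : p ≠ []
  hchain : List.Chain' xadj p
  hclosed : p.head hp = p.getLast hp
  hbd : {v | v ∈ p} = bdry D
  hfin : D.Finite
  ib : ℕ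
  ic : ℕ
  idx : ℕ
  h0b : 0 < ib
  hbc : ib < ic
  hcd : ic < idx
  hdlen : idx + 1 < p.length

namespace Quad

def ptA (q : Quad) : V := q.p.head q.hp
def ptB (q : Quad) : V := q.p.getD q.ib ((0 : ℤ), (0 : ℤ))
def ptC (q : Quad) : V := q.p.getD q.ic ((0 : ℤ), (0 : ℤ))
def ptD (q : Quad) : V := q.p.getD q.idx ((0 : ℤ), (0 : ℤ))

/-- The (closed) arc `[ab]` of the boundary of a quad. -/
def arcAB (q : Quad) : Set V := {v | v ∈ q.p.take (q.ib + 1)}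

/-- The (closed) arc `[bc]` of the boundary of a quad. -/
def arcBC (q : Quad) : Set V := {v | v ∈ (q.p.drop q.ib).take (q.ic - q.ib + 1)}

/-- The (closed) arc `[cd]` of the boundary of a quad. -/
def arcCD (q : Quad) : Set V := {v | v ∈ (q.p.drop q.ic).take (q.idx - q.ic + 1)}

/-- The (closed) arc `[da]` of the boundary of a quad. -/
def arcDA (q : Quad) : Set V := {v | v ∈ q.p.drop q.idx}

/-- The open arc `(bc)` (excluding the endpoints `b` and `c`). -/
def openBC (q : Quad) : Set V :=
  {v | v ∈ (((q.p.drop q.ib).take (q.ic - q.ib + 1)).drop 1).dropLast}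

/-- The open arc `(da)` (excluding the endpoints `d` and `a`). -/
def openDA (q : Quad) : Set V := {v | v ∈ ((q.p.drop q.idx).drop 1).dropLast}

end Quad

/-!
Negating the heights and shifting them by a constant are almost symmetries of height functions.
Together with Holley's inequality they show that the variance at `o`, when the height at `w` is
pinned to `0`, is at most twice the variance of `h o - h w`. The gauge symmetry of the signs of a
height function with given absolute values makes covariances increase with the volume. So they have
infinite-volume limits, and the variance at `o` in a domain not containing `w` is at most twice the
infinite-volume energy of a pair of opposite unit charges at `o` and `w`.

The infinite-volume covariance is invariant under translations and, as configurations only interact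
along edges, reflection positive for every vertical, horizontal or diagonal mirror through the
vertices. Reflection positivity makes dipoles at different places orthogonal up to a constant
factor. Hence the energy of the pair of charges is at most a constant times the sum of the squares
of any unit flow from `o` to `w`. A flow which spreads out evenly over `i` vertices at distance `i`
and refocuses symmetrically costs `∑ 1 / i`.
-/

section FiniteSums

lemma sum_range_succ_smul_sub_succ (R : Type*) {M : Type*} [CommRing R] [AddCommGroup M]
    [Module R M] (x : ℕ → M) (m : ℕ) :
    ∑ j ∈ Finset.range m, ((j : R) + 1) • (x j - x (j + 1)) =
      ∑ j ∈ Finset.range m, x j - (m : R) • x m := by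
  induction m with
  | zero => simp
  | succ m ih =>
    rw [Finset.sum_range_succ, ih, Finset.sum_range_succ]
    push_cast
    module

lemma sum_range_sq_div_le (m : ℕ) :
    ∑ j ∈ Finset.range (m + 1), ((j + 1) / ((m + 1) * (m + 2)) : ℝ) ^ 2 ≤ ((m + 1 : ℕ) : ℝ)⁻¹ := by
  have hterm : ∀ j ∈ Finset.range (m + 1),
      ((j + 1) / ((m + 1) * (m + 2)) : ℝ) ^ 2 ≤ (((m + 1 : ℕ) : ℝ)⁻¹) ^ 2 := fun j hj => by
    have hj : (j : ℝ) + 1 ≤ m + 1 := by exact_mod_cast Finset.mem_range.1 hj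
    gcongr
    rw [div_le_iff₀ (by positivity)]
    push_cast
    field_simp
    linarith
  refine (Finset.sum_le_card_nsmul _ _ _ hterm).trans_eq ?_
  rw [Finset.card_range, nsmul_eq_mul]
  field_simp

lemma sum_range_inv_sq_le (m : ℕ) :
    ∑ _j ∈ Finset.range (m + 2), ((m + 2 : ℕ) : ℝ)⁻¹ ^ 2 ≤ ((m + 1 : ℕ) : ℝ)⁻¹ := by
  rw [Finset.sum_const, Finset.card_range, nsmul_eq_mul]
  calc ((m + 2 : ℕ) : ℝ) * ((m + 2 : ℕ) : ℝ)⁻¹ ^ 2 = ((m + 2 : ℕ) : ℝ)⁻¹ := by field_simp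
    _ ≤ ((m + 1 : ℕ) : ℝ)⁻¹ := by gcongr; omega

lemma expec_eq_expect {α β : Type*} {S : Set α} {s : Finset β} {e : β → α}
    (he : Set.BijOn e s S) (f : α → ℝ) : expec S f = 𝔼 x ∈ s, f (e x) := by
  have hcard : Nat.card S = s.card := by
    rw [← Nat.card_congr he.equiv]; exact Nat.card_eq_card_toFinset _ |>.trans (by simp)
  rw [expec, hcard, ← finsum_mem_eq_of_bijOn e he fun _ _ => rfl, finsum_mem_coe_finset,
    Finset.expect_eq_sum_div_card]

end FiniteSums

section Lattice

open scoped FinsetFamily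

variable {α : Type*} [DistribLattice α] {μ f : α → ℝ} {P Q : Finset α}

theorem sum_mul_sum_le_of_logSupermodular (hμ : 0 ≤ μ) (hf : 0 ≤ f) (hmono : Monotone f)
    (hlog : ∀ a b, μ a * μ b ≤ μ (a ⊓ b) * μ (a ⊔ b))
    (hinf : ∀ a ∈ P, ∀ b ∈ Q, a ⊓ b ∈ P) (hsup : ∀ a ∈ P, ∀ b ∈ Q, a ⊔ b ∈ Q) :
    (∑ a ∈ P, μ a * f a) * ∑ b ∈ Q, μ b ≤ (∑ a ∈ P, μ a) * ∑ b ∈ Q, μ b * f b := by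
  classical
  have hμf : 0 ≤ μ * f := mul_nonneg hμ hf
  calc (∑ a ∈ P, (μ * f) a) * ∑ b ∈ Q, μ b
      ≤ (∑ a ∈ P ⊼ Q, μ a) * ∑ b ∈ P ⊻ Q, (μ * f) b := by
        refine four_functions_theorem _ _ _ _ hμf hμ hμ hμf (fun a b => ?_) P Q
        calc μ a * f a * μ b = μ a * μ b * f a := by ring
          _ ≤ μ (a ⊓ b) * μ (a ⊔ b) * f (a ⊔ b) :=
            mul_le_mul (hlog a b) (hmono le_sup_left) (hf a) (mul_nonneg (hμ _) (hμ _))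
          _ = μ (a ⊓ b) * (μ (a ⊔ b) * f (a ⊔ b)) := by ring
    _ ≤ (∑ a ∈ P, μ a) * ∑ b ∈ Q, (μ * f) b :=
        mul_le_mul
          (Finset.sum_le_sum_of_subset_of_nonneg (Finset.infs_subset_iff.2 hinf) fun a _ _ => hμ a)
          (Finset.sum_le_sum_of_subset_of_nonneg (Finset.sups_subset_iff.2 hsup) fun a _ _ => hμf a)
          (Finset.sum_nonneg fun a _ => hμf a) (Finset.sum_nonneg fun a _ => hμ a)

end Lattice

section ReflectionPositivity

open scoped Classical in
lemma sum_fiber_mul_nonneg {α β : Type*} (S : Finset α) (r : α → β) (f : α → ℝ) :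
    0 ≤ ∑ x ∈ S ×ˢ S with r x.1 = r x.2, f x.1 * f x.2 := by
  rw [← Finset.sum_fiberwise_of_maps_to (t := S.image r) (g := fun x => r x.1)
    fun x hx => Finset.mem_image_of_mem _ (Finset.mem_product.1 (Finset.mem_filter.1 hx).1).1]
  refine Finset.sum_nonneg fun b _ => ?_
  have hfiber : {x ∈ {x ∈ S ×ˢ S | r x.1 = r x.2} | r x.1 = b} =
      {a ∈ S | r a = b} ×ˢ {a ∈ S | r a = b} := by
    ext x
    simp only [Finset.mem_filter, Finset.mem_product]
    grind
  rw [hfiber, Finset.sum_product, ← Finset.sum_mul_sum]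
  exact mul_self_nonneg _

lemma piecewise_comp_comp {ι α : Type*} {θ : ι → ι} (hθ : Function.Involutive θ) {L : Set ι}
    [DecidablePred (· ∈ L)] (hcover : ∀ v, v ∉ L → θ v ∈ L)
    (hmirror : ∀ v ∈ L, θ v ∈ L → θ v = v) (h : ι → α) :
    L.piecewise h (h ∘ θ) ∘ θ = L.piecewise h (h ∘ θ) := by
  ext v
  have := hcover v; have := hmirror v; have := hθ v
  simp only [Set.piecewise, Function.comp_apply]
  grind

open scoped Classical in
/-- For a mirror `{v | θ v = v}` separating `L` from `θ L`, pairs of symmetric configurations which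
agree on the mirror are in bijection with configurations, by gluing their halves; so the sum is a
sum of squares over the values on the mirror. -/
theorem sum_mul_comp_nonneg {ι α : Type*} {S : Finset (ι → α)} {θ : ι → ι}
    (hθ : Function.Involutive θ) {L : Set ι} [DecidablePred (· ∈ L)]
    (hcover : ∀ v, v ∉ L → θ v ∈ L)
    (hmirror : ∀ v ∈ L, θ v ∈ L → θ v = v) (hcomp : ∀ h ∈ S, h ∘ θ ∈ S)
    (hglue : ∀ p ∈ S, ∀ q ∈ S, (∀ v, θ v = v → p v = q v) → L.piecewise p q ∈ S)
    {f : (ι → α) → ℝ} (hf : ∀ g h, Set.EqOn g h L → f g = f h) :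
    0 ≤ ∑ h ∈ S, f h * f (h ∘ θ) := by
  let P := {p ∈ S | p ∘ θ = p}
  let r : (ι → α) → {v // θ v = v} → α := fun p v => p v
  have hsymm (h : ι → α) : L.piecewise (h ∘ θ) h ∘ θ = L.piecewise (h ∘ θ) h := by
    simpa only [Function.comp_assoc, hθ.comp_self, Function.comp_id] using
      piecewise_comp_comp hθ hcover hmirror (h ∘ θ)
  have hfold : ∑ h ∈ S, f h * f (h ∘ θ) = ∑ x ∈ P ×ˢ P with r x.1 = r x.2, f x.1 * f x.2 := by
    refine Finset.sum_nbij' (fun h => (L.piecewise h (h ∘ θ), L.piecewise (h ∘ θ) h))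
      (fun x => L.piecewise x.1 x.2) (fun h hh => ?_) (fun x hx => ?_) (fun h _ => ?_)
      (fun x hx => ?_) fun h _ => ?_
    · have hmem := hglue h hh _ (hcomp h hh) fun v hv => by simp [hv]
      have hmem' := hglue _ (hcomp h hh) h hh fun v hv => by simp [hv]
      simp only [P, Finset.mem_filter, Finset.mem_product]
      refine ⟨⟨⟨hmem, piecewise_comp_comp hθ hcover hmirror h⟩, hmem', hsymm h⟩,
        funext fun ⟨v, hv⟩ => ?_⟩
      simp [r, Set.piecewise, hv]
    · simp only [P, Finset.mem_filter, Finset.mem_product] at hx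
      exact hglue _ hx.1.1.1 _ hx.1.2.1 fun v hv => congrFun hx.2 ⟨v, hv⟩
    · ext v
      by_cases hv : v ∈ L <;> simp [hv]
    · simp only [P, Finset.mem_filter, Finset.mem_product] at hx
      have hp (v : ι) : x.1 (θ v) = x.1 v := congrFun hx.1.1.2 v
      have hq (v : ι) : x.2 (θ v) = x.2 v := congrFun hx.1.2.2 v
      have hr (v : ι) (hv : θ v = v) : x.1 v = x.2 v := congrFun hx.2 ⟨v, hv⟩
      ext v <;> have := hcover v <;> have := hmirror v <;>
        simp only [Set.piecewise, Function.comp_apply] <;> grind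
    · congr 1 <;> refine hf _ _ fun v hv => ?_ <;> simp [hv]
  rw [hfold]
  exact sum_fiber_mul_nonneg P r f

end ReflectionPositivity

section Decoupling

lemma sub_succ_nonneg_of_antitone {c : ℕ → ℝ} (hc : BddAbove (Set.range c))
    (hd : Antitone fun r => c r - c (r + 1)) (R : ℕ) : 0 ≤ c R - c (R + 1) := by
  obtain ⟨K, hK⟩ := hc
  by_contra! hneg
  have hgrow (n : ℕ) : c R + n * (c (R + 1) - c R) ≤ c (R + n) := by
    induction n with
    | zero => simp
    | succ n ih =>
      have := hd (Nat.le_add_right R n)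
      push_cast
      simp only [← add_assoc] at this ⊢
      linarith
  obtain ⟨n, hn⟩ := exists_nat_gt ((K - c R) / (c (R + 1) - c R))
  rw [div_lt_iff₀ (by linarith)] at hn
  linarith [hgrow n, hK ⟨R + n, rfl⟩]

variable {W : Type*} [AddCommGroup W] [Module ℝ W] {B : LinearMap.BilinForm ℝ W}
  {T : Module.End ℝ W}

lemma apply_pow_le_apply_self (hB : B.IsPosSemidef) (hT : ∀ x y, B (T x) (T y) = B x y) (y : W)
    (r : ℕ) : B y ((T ^ r) y) ≤ B y y := by
  have hTr : B ((T ^ r) y) ((T ^ r) y) = B y y := by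
    induction r with
    | zero => rfl
    | succ r ih => rw [pow_succ', Module.End.mul_apply, hT, ih]
  have hsymm : B ((T ^ r) y) y = B y ((T ^ r) y) := hB.eq _ _
  have hpos := hB.nonneg (y - (T ^ r) y)
  simp only [map_sub, LinearMap.sub_apply] at hpos
  linarith

/-- The numbers `c r = B y (T ^ r y)` are convex in `r` and bounded above, so their decrements
decrease to a nonnegative limit; the sum telescopes to a difference of decrements. -/
theorem sum_neg_apply_pow_le (hB : B.IsPosSemidef) (hT : ∀ x y, B (T x) (T y) = B x y) {x y : W}
    (hx : x = y - T y) (hneg : ∀ r : ℕ, B x ((T ^ (r + 1)) x) ≤ 0) (S : Finset ℕ) :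
    ∑ r ∈ S, -B x ((T ^ (r + 1)) x) ≤ B x x / 2 := by
  let c r := B y ((T ^ r) y)
  have hTc (r : ℕ) : B (T y) ((T ^ (r + 1)) y) = c r := by
    rw [pow_succ', Module.End.mul_apply, hT]
  have hcx (r : ℕ) : -B x ((T ^ (r + 1)) x) = (c r - c (r + 1)) - (c (r + 1) - c (r + 1 + 1)) := by
    have hTr (r : ℕ) : (T ^ r) (T y) = (T ^ (r + 1)) y := by rw [pow_succ, Module.End.mul_apply]
    simp only [hx, map_sub, LinearMap.sub_apply, hTr, hTc, c]
    ring
  have hc0 : c 0 - c 1 = B x x / 2 := by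
    have hsymm : B (T y) y = B y (T y) := hB.eq _ _
    simp only [hx, map_sub, LinearMap.sub_apply, hT, hsymm, c, pow_zero, pow_one,
      Module.End.one_apply]
    ring
  have hanti : Antitone fun r => c r - c (r + 1) := antitone_nat_of_succ_le fun r => by
    linarith [hneg r, hcx r]
  have hbdd : BddAbove (Set.range c) := ⟨B y y, by
    rintro _ ⟨r, rfl⟩; exact apply_pow_le_apply_self hB hT y r⟩
  calc ∑ r ∈ S, -B x ((T ^ (r + 1)) x)
      ≤ ∑ r ∈ Finset.range (S.sup id).succ, -B x ((T ^ (r + 1)) x) :=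
        Finset.sum_le_sum_of_subset_of_nonneg (Finset.subset_range_sup_succ S)
          fun r _ _ => neg_nonneg.2 (hneg r)
    _ = (c 0 - c 1) - (c _ - c (_ + 1)) := by
        simp only [hcx]
        exact Finset.sum_range_sub' (fun r => c r - c (r + 1)) _
    _ ≤ B x x / 2 := by linarith [sub_succ_nonneg_of_antitone hbdd hanti (S.sup id).succ]

lemma sum_neg_apply_pow_dist_le (hB : B.IsPosSemidef) (hT : ∀ x y, B (T x) (T y) = B x y)
    {x y : W} (hx : x = y - T y) (hneg : ∀ r : ℕ, B x ((T ^ (r + 1)) x) ≤ 0) (i : ℕ)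
    (s : Finset ℕ) : ∑ j ∈ s.erase i, -B x ((T ^ i.dist j) x) ≤ B x x := by
  have hside (s : Finset ℕ) (hs : Set.InjOn i.dist s) (hi : i ∉ s) :
      ∑ j ∈ s, -B x ((T ^ i.dist j) x) ≤ B x x / 2 := by
    refine le_of_eq_of_le ?_
      (sum_neg_apply_pow_le hB hT hx hneg (s.image fun j => i.dist j - 1))
    have hpos (j) (hj : j ∈ s) : 0 < i.dist j :=
      Nat.dist_pos_of_ne fun h => hi (h ▸ hj)
    rw [Finset.sum_image fun j hj k hk h => hs hj hk (by
      have := hpos j hj; have := hpos k hk; grind)]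
    exact Finset.sum_congr rfl fun j hj => by rw [Nat.sub_add_cancel (hpos j hj)]
  rw [← Finset.sum_filter_add_sum_filter_not _ (i < ·)]
  have habove := hside {j ∈ s.erase i | i < j} (fun j hj k hk h => by
    simp [Nat.dist] at *; omega) (by simp)
  have hbelow := hside {j ∈ s.erase i | ¬i < j} (fun j hj k hk h => by
    simp [Nat.dist] at *; omega) (by simp)
  linarith

/-- The interactions of the `X i` are dominated by those with their own translates, which are
summable by `sum_neg_apply_pow_dist_le`; hence the `X i` are orthogonal up to a factor `2`. -/
theorem apply_sum_self_le (hB : B.IsPosSemidef) (hT : ∀ x y, B (T x) (T y) = B x y)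
    {X Y : ℕ → W} (hX : ∀ i, X i = Y i - T (Y i))
    (hneg : ∀ i r : ℕ, B (X i) ((T ^ (r + 1)) (X i)) ≤ 0)
    (hlt : ∀ i j, i < j → 2 * B (X i) (X j) ≤
      -B (X i) ((T ^ (j - i)) (X i)) - B (X j) ((T ^ (j - i)) (X j))) (s : Finset ℕ) :
    B (∑ i ∈ s, X i) (∑ i ∈ s, X i) ≤ 2 * ∑ i ∈ s, B (X i) (X i) := by
  let k i j := -B (X i) ((T ^ i.dist j) (X i))
  have hne (i j : ℕ) (hij : i ≠ j) : 2 * B (X i) (X j) ≤ k i j + k j i := by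
    rcases hij.lt_or_gt with h | h
    · simpa only [k, Nat.dist_comm j i, Nat.dist_eq_sub_of_le h.le, ← sub_eq_add_neg]
        using hlt i j h
    · have hsymm : B (X i) (X j) = B (X j) (X i) := hB.eq _ _
      have := hlt j i h
      simp only [k, Nat.dist_comm i j, Nat.dist_eq_sub_of_le h.le]
      linarith
  have hswap : ∑ i ∈ s, ∑ j ∈ s.erase i, k j i = ∑ i ∈ s, ∑ j ∈ s.erase i, k i j :=
    Finset.sum_comm' fun i j => by grind
  have hoff : ∑ i ∈ s, ∑ j ∈ s.erase i, 2 * B (X i) (X j) ≤ 2 * ∑ i ∈ s, B (X i) (X i) :=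
    calc ∑ i ∈ s, ∑ j ∈ s.erase i, 2 * B (X i) (X j)
        ≤ ∑ i ∈ s, ∑ j ∈ s.erase i, (k i j + k j i) := by
          gcongr with i _ j hj
          exact hne i j (Finset.ne_of_mem_erase hj).symm
      _ = 2 * ∑ i ∈ s, ∑ j ∈ s.erase i, k i j := by
          simp only [Finset.sum_add_distrib, hswap, two_mul]
      _ ≤ 2 * ∑ i ∈ s, B (X i) (X i) := by
          gcongr with i
          exact sum_neg_apply_pow_dist_le hB hT (hX i) (hneg i) i s
  have hexpand : B (∑ i ∈ s, X i) (∑ i ∈ s, X i) =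
      ∑ i ∈ s, (B (X i) (X i) + ∑ j ∈ s.erase i, B (X i) (X j)) := by
    rw [LinearMap.BilinForm.sum_left]
    exact Finset.sum_congr rfl fun i hi => by
      rw [map_sum, Finset.add_sum_erase s (fun j => B (X i) (X j)) hi]
  simp only [← Finset.mul_sum] at hoff
  rw [hexpand, Finset.sum_add_distrib]
  linarith

end Decoupling

theorem card_subgroup_mul_card_le {G : Type*} [CommGroup G] {X Y Z : Subgroup G} (hX : X ≤ Z)
    (hY : Y ≤ Z) [Finite Z] :
    Nat.card X * Nat.card Y ≤ Nat.card Z * Nat.card (X ⊓ Y : Subgroup G) := by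
  have hXY : Nat.card X * X.relIndex Y = Nat.card (X ⊔ Y : Subgroup G) := by
    simpa [Subgroup.relIndex_sup_left] using
      Subgroup.relIndex_mul_relIndex ⊥ X (X ⊔ Y) bot_le le_sup_left
  have hY' : Nat.card (X ⊓ Y : Subgroup G) * X.relIndex Y = Nat.card Y := by
    simpa [Subgroup.inf_relIndex_right] using
      Subgroup.relIndex_mul_relIndex ⊥ (X ⊓ Y) Y bot_le inf_le_right
  have hZ : Nat.card (X ⊔ Y : Subgroup G) ≤ Nat.card Z :=
    Nat.card_le_card_of_injective _ (Subgroup.inclusion_injective (sup_le hX hY))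
  calc Nat.card X * Nat.card Y
      = Nat.card X * X.relIndex Y * Nat.card (X ⊓ Y : Subgroup G) := by rw [← hY']; ring
    _ ≤ Nat.card Z * Nat.card (X ⊓ Y : Subgroup G) := by rw [hXY]; gcongr

lemma isEvenV_iff {v : V} : IsEvenV v ↔ (v.1 + v.2) % 2 = 0 := Int.even_iff

instance : DecidablePred IsEvenV := fun _ => decidable_of_iff' _ isEvenV_iff

lemma adj.symm {u v : V} (h : adj u v) : adj v u := by
  unfold adj at *; omega

lemma adj.not_isEvenV_iff {u v : V} (h : adj u v) : ¬IsEvenV u ↔ IsEvenV v := by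
  simp only [isEvenV_iff]; unfold adj at h; omega

lemma adj.ne {u v : V} (h : adj u v) : u ≠ v := by
  rintro rfl; simp [adj] at h

/-- The right neighbour of a vertex. -/
def rightNbr (v : V) : V := (v.1 + 1, v.2)

lemma adj_rightNbr (v : V) : adj v (rightNbr v) := by simp [adj, rightNbr]

/-- The ground state: height `0` on even and `1` on odd vertices. -/
def ground (v : V) : ℤ := if IsEvenV v then 0 else 1

/-- A height function on the whole lattice. -/
structure IsHeight (h : V → ℤ) : Prop where
  step : ∀ ⦃u v⦄, adj u v → (h u - h v).natAbs = 1
  parity : ∀ v, IsEvenV v ↔ h v % 2 = 0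

namespace IsHeight

variable {g h : V → ℤ}

lemma inf (hg : IsHeight g) (hh : IsHeight h) : IsHeight (g ⊓ h) where
  step u v huv := by
    have := hg.step huv; have := hh.step huv
    have := (hg.parity u).symm.trans (hh.parity u)
    simp only [Pi.inf_apply]; omega
  parity v := by
    have := hg.parity v; have := hh.parity v
    rcases min_choice (g v) (h v) with hm | hm <;> simpa only [Pi.inf_apply, hm]

lemma neg (hh : IsHeight h) : IsHeight (-h) where
  step u v huv := by have := hh.step huv; simp only [Pi.neg_apply]; omega
  parity v := by simpa using hh.parity v

lemma sup (hg : IsHeight g) (hh : IsHeight h) : IsHeight (g ⊔ h) := by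
  simpa [neg_inf] using (hg.neg.inf hh.neg).neg

lemma natAbs (hh : IsHeight h) : IsHeight fun v => ((h v).natAbs : ℤ) where
  step u v huv := by
    have := hh.step huv
    have := hh.parity u; have := hh.parity v; have := huv.not_isEvenV_iff
    omega
  parity v := (hh.parity v).trans (by omega)

end IsHeight

lemma isHeight_ground : IsHeight ground where
  step u v huv := by
    have := huv.not_isEvenV_iff
    by_cases hv : IsEvenV v <;> simp_all [ground]
  parity v := by by_cases hv : IsEvenV v <;> simp [ground, hv]

/-- Height functions which agree with the ground state at even vertices outside `E` and odd
vertices outside `N`. The cutoff `H + 1` makes configurations finite in number; it is at least `1`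
so that the ground state is always a configuration. -/
structure IsConfig (H : ℕ) (E N : Finset V) (h : V → ℤ) : Prop extends IsHeight h where
  bound : ∀ v, (h v).natAbs ≤ H + 1
  even_eq_zero : ∀ v, IsEvenV v → v ∉ E → h v = 0
  odd_eq_one : ∀ v, ¬IsEvenV v → v ∉ N → h v = 1

lemma isConfig_ground (H : ℕ) (E N : Finset V) : IsConfig H E N ground where
  toIsHeight := isHeight_ground
  bound v := by unfold ground; split_ifs <;> simp
  even_eq_zero v hv _ := if_pos hv
  odd_eq_one v hv _ := if_neg hv

lemma IsConfig.mono {H : ℕ} {E E' N N' : Finset V} {h : V → ℤ} (hh : IsConfig H E N h)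
    (hE : E ⊆ E') (hN : N ⊆ N') : IsConfig H E' N' h :=
  { hh with
    even_eq_zero := fun v h0 hv => hh.even_eq_zero v h0 fun hvE => hv (hE hvE)
    odd_eq_one := fun v h1 hv => hh.odd_eq_one v h1 fun hvN => hv (hN hvN) }

lemma IsConfig.natAbs {H : ℕ} {E N : Finset V} {h : V → ℤ} (hh : IsConfig H E N h) :
    IsConfig H E N fun v => ((h v).natAbs : ℤ) where
  toIsHeight := hh.toIsHeight.natAbs
  bound v := by simpa only [Int.natAbs_natCast] using hh.bound v
  even_eq_zero v h0 hv := by simp [hh.even_eq_zero v h0 hv]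
  odd_eq_one v h1 hv := by simp [hh.odd_eq_one v h1 hv]

lemma IsConfig.eq_ground {H : ℕ} {E N : Finset V} {h : V → ℤ} (hh : IsConfig H E N h) {v : V}
    (hv : v ∉ E ∪ N) : h v = ground v := by
  rw [Finset.mem_union, not_or] at hv
  unfold ground
  split_ifs with h0
  exacts [hh.even_eq_zero v h0 hv.1, hh.odd_eq_one v h0 hv.2]

lemma finite_setOf_isConfig (H : ℕ) (E N : Finset V) : {h | IsConfig H E N h}.Finite := by
  let restrict (h : V → ℤ) (v : ↥(E ∪ N)) : ℤ := h v
  refine Set.Finite.of_finite_image (f := restrict) ?_ ?_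
  · refine (Set.Finite.pi' fun _ => Set.finite_Icc (-(H + 1) : ℤ) (H + 1)).subset ?_
    rintro _ ⟨h, hh, rfl⟩ v
    have := hh.bound v
    simp only [restrict, Set.mem_Icc]; omega
  · intro g hg h hh hgh
    funext v
    by_cases hv : v ∈ E ∪ N
    · exact congrFun hgh ⟨v, hv⟩
    · rw [hg.eq_ground hv, hh.eq_ground hv]

/-- The finite set of configurations (see `IsConfig`). -/
noncomputable def configs (H : ℕ) (E N : Finset V) : Finset (V → ℤ) :=
  (finite_setOf_isConfig H E N).toFinset

@[simp] lemma mem_configs {H : ℕ} {E N : Finset V} {h : V → ℤ} :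
    h ∈ configs H E N ↔ IsConfig H E N h := by
  simp [configs]

lemma configs_nonempty (H : ℕ) (E N : Finset V) : (configs H E N).Nonempty :=
  ⟨ground, mem_configs.2 (isConfig_ground H E N)⟩

/-- The heights at even vertices, extended by zero to odd vertices. -/
def evenHeight (h : V → ℤ) (v : V) : ℝ := if IsEvenV v then h v else 0

lemma evenHeight_congr {g h : V → ℤ} (hgh : ∀ v, IsEvenV v → g v = h v) :
    evenHeight g = evenHeight h := by
  funext v
  unfold evenHeight
  split_ifs with hv
  · rw [hgh v hv]
  · rfl

/-- The nearest neighbours of the vertices of `E`. -/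
def nbrs (E : Finset V) : Finset V :=
  E.biUnion fun v => {(v.1 + 1, v.2), (v.1 - 1, v.2), (v.1, v.2 + 1), (v.1, v.2 - 1)}

lemma mem_nbrs {E : Finset V} {u : V} : u ∈ nbrs E ↔ ∃ v ∈ E, adj u v := by
  simp only [nbrs, adj, Finset.mem_biUnion, Finset.mem_insert, Finset.mem_singleton,
    Prod.ext_iff]
  exact exists_congr fun v => and_congr_right fun _ => by omega

lemma nbrs_mono {E E' : Finset V} (h : E ⊆ E') : nbrs E ⊆ nbrs E' :=
  Finset.biUnion_subset_biUnion_of_subset_left _ h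

/-- The covariance of the even heights at `v` and `w` when the even vertices outside `E` are pinned
to height `0`. By `cov_eq_expect`, freeing further odd vertices does not change it. -/
noncomputable def cov (H : ℕ) (E : Finset V) (v w : V) : ℝ :=
  𝔼 h ∈ configs H E (nbrs E), evenHeight h v * evenHeight h w

section FreeOddVertices

variable {H : ℕ} {E N : Finset V} {o : V} {h : V → ℤ}

lemma IsConfig.eq_zero_of_adj (hh : IsConfig H E N h) (ho : ¬IsEvenV o) (hoE : o ∉ nbrs E) {v : V}
    (hv : adj o v) : h v = 0 :=
  hh.even_eq_zero v (hv.not_isEvenV_iff.1 ho) fun hvE => hoE (mem_nbrs.2 ⟨v, hvE, hv⟩)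

lemma IsConfig.update_neg (hh : IsConfig H E N h) (ho : ¬IsEvenV o) (hoE : o ∉ nbrs E)
    (hoN : o ∈ N) : IsConfig H E N (Function.update h o (-h o)) where
  step u v huv := by
    have h1 := hh.step huv
    rcases eq_or_ne u o with rfl | hu
    · have := hh.eq_zero_of_adj ho hoE huv
      rw [Function.update_self, Function.update_of_ne huv.ne.symm]; omega
    rcases eq_or_ne v o with rfl | hv
    · have := hh.eq_zero_of_adj ho hoE huv.symm
      rw [Function.update_self, Function.update_of_ne hu]; omega
    · rwa [Function.update_of_ne hu, Function.update_of_ne hv]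
  parity v := by
    rcases eq_or_ne v o with rfl | hv
    · rw [Function.update_self]; exact (hh.parity v).trans (by omega)
    · rw [Function.update_of_ne hv]; exact hh.parity v
  bound v := by
    rcases eq_or_ne v o with rfl | hv
    · rw [Function.update_self, Int.natAbs_neg]; exact hh.bound v
    · rw [Function.update_of_ne hv]; exact hh.bound v
  even_eq_zero v hv hvE := by
    rw [Function.update_of_ne (by rintro rfl; exact ho hv)]; exact hh.even_eq_zero v hv hvE
  odd_eq_one v hv hvN := by
    rw [Function.update_of_ne (by rintro rfl; exact hvN hoN)]; exact hh.odd_eq_one v hv hvN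

lemma isConfig_insert_and_eq_one_iff (ho : ¬IsEvenV o) (hoN : o ∉ N) :
    IsConfig H E (insert o N) h ∧ h o = 1 ↔ IsConfig H E N h := by
  constructor
  · rintro ⟨hh, h1⟩
    refine { hh with odd_eq_one := fun v hv hvN => ?_ }
    rcases eq_or_ne v o with rfl | hvo
    · exact h1
    · exact hh.odd_eq_one v hv (by simp [hvo, hvN])
  · exact fun hh => ⟨hh.mono subset_rfl (Finset.subset_insert o N), hh.odd_eq_one o ho hoN⟩

lemma sum_configs_insert (ho : ¬IsEvenV o) (hoE : o ∉ nbrs E) (hoN : o ∉ N)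
    (f : (V → ℤ) → ℝ) (hf : ∀ g h, (∀ v, IsEvenV v → g v = h v) → f g = f h) :
    ∑ h ∈ configs H E (insert o N), f h = 2 * ∑ h ∈ configs H E N, f h := by
  have hflip : ∑ h ∈ configs H E (insert o N) with ¬h o = 1, f h =
      ∑ h ∈ configs H E (insert o N) with h o = 1, f h := by
    refine Finset.sum_nbij' (fun h => Function.update h o (-h o))
      (fun h => Function.update h o (-h o)) ?_ ?_ (by simp) (by simp) fun h _ => hf _ _ ?_
    · simp only [Finset.mem_filter, mem_configs, Function.update_self]
      rintro h ⟨hh, h1⟩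
      have := hh.step (adj_rightNbr o)
      rw [hh.eq_zero_of_adj ho hoE (adj_rightNbr o)] at this
      exact ⟨hh.update_neg ho hoE (Finset.mem_insert_self o N), by omega⟩
    · simp only [Finset.mem_filter, mem_configs, Function.update_self]
      rintro h ⟨hh, h1⟩
      exact ⟨hh.update_neg ho hoE (Finset.mem_insert_self o N), by omega⟩
    · intro v hv
      rw [Function.update_of_ne (by rintro rfl; exact ho hv)]
  have hpin : (configs H E (insert o N)).filter (fun h => h o = 1) = configs H E N := by
    ext h
    simp only [Finset.mem_filter, mem_configs, isConfig_insert_and_eq_one_iff ho hoN]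
  rw [← Finset.sum_filter_add_sum_filter_not _ fun h => h o = 1, hflip, hpin, two_mul]

lemma configs_insert_of_isEvenV (ho : IsEvenV o) : configs H E (insert o N) = configs H E N := by
  ext h
  simp only [mem_configs]
  refine ⟨fun hh => { hh with odd_eq_one := fun v hv hvN => hh.odd_eq_one v hv ?_ },
    fun hh => hh.mono subset_rfl (Finset.subset_insert o N)⟩
  exact Finset.mem_insert.not.2 (not_or.2 ⟨by rintro rfl; exact hv ho, hvN⟩)

lemma expect_configs_insert (hoE : o ∉ nbrs E)
    (f : (V → ℤ) → ℝ) (hf : ∀ g h, (∀ v, IsEvenV v → g v = h v) → f g = f h) :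
    𝔼 h ∈ configs H E (insert o N), f h = 𝔼 h ∈ configs H E N, f h := by
  by_cases hoN : o ∈ N
  · rw [Finset.insert_eq_of_mem hoN]
  by_cases ho : IsEvenV o
  · rw [configs_insert_of_isEvenV ho]
  have hcard := sum_configs_insert (H := H) ho hoE hoN (fun _ => 1) fun _ _ _ => rfl
  simp only [Finset.sum_const, nsmul_eq_mul, mul_one] at hcard
  rw [Finset.expect_eq_sum_div_card, Finset.expect_eq_sum_div_card, hcard,
    sum_configs_insert ho hoE hoN f hf, mul_div_mul_left _ _ two_ne_zero]

lemma expect_configs_eq (hN : nbrs E ⊆ N)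
    (f : (V → ℤ) → ℝ) (hf : ∀ g h, (∀ v, IsEvenV v → g v = h v) → f g = f h) :
    𝔼 h ∈ configs H E N, f h = 𝔼 h ∈ configs H E (nbrs E), f h := by
  suffices ∀ M : Finset V, Disjoint M (nbrs E) →
      𝔼 h ∈ configs H E (M ∪ nbrs E), f h = 𝔼 h ∈ configs H E (nbrs E), f h by
    simpa [Finset.sdiff_union_of_subset hN] using this (N \ nbrs E) Finset.sdiff_disjoint
  intro M
  induction M using Finset.induction_on with
  | empty => simp
  | insert o M _ ih =>
    intro hM
    rw [Finset.disjoint_insert_left] at hM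
    rw [Finset.insert_union, expect_configs_insert hM.1 f hf, ih hM.2]

lemma cov_eq_expect (hN : nbrs E ⊆ N) (v w : V) :
    cov H E v w = 𝔼 h ∈ configs H E N, evenHeight h v * evenHeight h w :=
  (expect_configs_eq hN _ fun _ _ hgh => by rw [evenHeight_congr hgh]).symm

end FreeOddVertices

section Gauge

/-- The vertex carrying the sign of `v` in a gauge: `v` itself if it is odd, and its right neighbour
if it is even. -/
def signSite (v : V) : V := if IsEvenV v then rightNbr v else v

/-- The sign changes `h ↦ s * h` between configurations with the same amplitudes `|h|`, whose
support is `A`: signs are constant across nonzero even vertices, and trivial at pinned vertices. At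
an even vertex of height `0` the sign is irrelevant; it is normalised by `signSite`. -/
def gauge (N : Finset V) (A : Set V) : Subgroup (V → ℤˣ) where
  carrier := {s | (∀ o, ¬IsEvenV o → o ∉ N → s o = 1) ∧ (∀ v, s v = s (signSite v)) ∧
    ∀ v ∈ A, IsEvenV v → ∀ o, adj v o → s o = s v}
  mul_mem' {s t} hs ht := ⟨fun o h0 hN => by simp [hs.1 o h0 hN, ht.1 o h0 hN],
    fun v => congrArg₂ (· * ·) (hs.2.1 v) (ht.2.1 v),
    fun v hv h0 o ho => congrArg₂ (· * ·) (hs.2.2 v hv h0 o ho) (ht.2.2 v hv h0 o ho)⟩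
  one_mem' := ⟨fun _ _ _ => rfl, fun _ => rfl, fun _ _ _ _ _ => rfl⟩
  inv_mem' {s} hs := ⟨fun o h0 hN => by simp [hs.1 o h0 hN],
    fun v => congrArg (·⁻¹) (hs.2.1 v), fun v hv h0 o ho => congrArg (·⁻¹) (hs.2.2 v hv h0 o ho)⟩

variable {H : ℕ} {E E' N : Finset V} {A : Set V} {a b : V → ℕ} {h : V → ℤ} {v w : V}

lemma not_isEvenV_signSite (v : V) : ¬IsEvenV (signSite v) := by
  unfold signSite
  split_ifs with hv
  · exact (adj_rightNbr v).symm.not_isEvenV_iff.2 hv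
  · exact hv

instance (N : Finset V) (A : Set V) : Finite (gauge N A) := by
  refine Finite.of_injective (fun (s : gauge N A) (v : N) => s.1 v) fun s t hst => ?_
  ext v : 2
  rw [s.2.2.1 v, t.2.2.1 v]
  by_cases hN : signSite v ∈ N
  · exact congrFun hst ⟨signSite v, hN⟩
  · rw [s.2.1 _ (not_isEvenV_signSite v) hN, t.2.1 _ (not_isEvenV_signSite v) hN]

noncomputable instance (N : Finset V) (A : Set V) : Fintype (gauge N A) := Fintype.ofFinite _

lemma signSite_of_not_isEvenV (hv : ¬IsEvenV v) : signSite v = v := if_neg hv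

lemma signSite_of_isEvenV (hv : IsEvenV v) : signSite v = rightNbr v := if_pos hv

lemma gauge_anti (N : Finset V) : Antitone (gauge N) :=
  fun _ _ hAB _ hs => ⟨hs.1, hs.2.1, fun v hv => hs.2.2 v (hAB hv)⟩

lemma gauge_union (N : Finset V) (A B : Set V) : gauge N (A ∪ B) = gauge N A ⊓ gauge N B := by
  refine le_antisymm (le_inf (gauge_anti N Set.subset_union_left)
    (gauge_anti N Set.subset_union_right)) fun s ⟨hA, hB⟩ => ⟨hA.1, hA.2.1, fun v hv => ?_⟩
  exact hv.elim (hA.2.2 v) (hB.2.2 v)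

lemma card_gauge_mul_card_le (N : Finset V) (A B : Set V) :
    Nat.card (gauge N A) * Nat.card (gauge N B) ≤
      Nat.card (gauge N (A ∩ B)) * Nat.card (gauge N (A ∪ B)) := by
  rw [gauge_union]
  exact card_subgroup_mul_card_le (gauge_anti N Set.inter_subset_left)
    (gauge_anti N Set.inter_subset_right)

/-- The product character `s ↦ s v * s w` of a gauge group. -/
noncomputable def signHom (N : Finset V) (A : Set V) (v w : V) : gauge N A →* ℝ :=
  ((Int.castRingHom ℝ : ℤ →* ℝ).comp (Units.coeHom ℤ)).comp
    ((Pi.evalMonoidHom (fun _ : V => ℤˣ) v * Pi.evalMonoidHom (fun _ : V => ℤˣ) w).comp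
      (gauge N A).subtype)

lemma signHom_apply (s : gauge N A) :
    signHom N A v w s = ((s.1 v : ℤ) : ℝ) * ((s.1 w : ℤ) : ℝ) := by
  simp [signHom]

lemma signHom_eq_one_iff : signHom N A v w = 1 ↔ ∀ s ∈ gauge N A, s v = s w := by
  simp only [MonoidHom.ext_iff, Subtype.forall, signHom_apply, MonoidHom.one_apply]
  refine forall₂_congr fun s _ => ?_
  rcases Int.units_eq_one_or (s v) with hv | hv <;>
    rcases Int.units_eq_one_or (s w) with hw | hw <;>
    norm_num [hv, hw]

open Classical in
/-- The average of `h v * h w` over the gauge orbit of the amplitudes `a`. -/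
noncomputable def orbitProd (N : Finset V) (v w : V) (a : V → ℕ) : ℝ :=
  if signHom N (Function.support a) v w = 1 then (a v : ℝ) * a w else 0

lemma orbitProd_nonneg (N : Finset V) (v w : V) : 0 ≤ orbitProd N v w := by
  intro a
  unfold orbitProd
  split_ifs <;> positivity

lemma orbitProd_mono (N : Finset V) (v w : V) : Monotone (orbitProd N v w) := by
  intro a b hab
  by_cases ha : signHom N (Function.support a) v w = 1
  · have hsupp : Function.support a ⊆ Function.support b := fun u hu =>
      (pos_of_ne_zero hu |>.trans_le (hab u)).ne'
    have hb : signHom N (Function.support b) v w = 1 :=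
      signHom_eq_one_iff.2 fun s hs => signHom_eq_one_iff.1 ha s (gauge_anti N hsupp hs)
    have := hab v; have := hab w
    rw [orbitProd, orbitProd, if_pos ha, if_pos hb]
    gcongr
  · rw [orbitProd, if_neg ha]
    exact orbitProd_nonneg N v w b

lemma sum_gauge_mul (N : Finset V) (v w : V) (a : V → ℕ) :
    ∑ s : gauge N (Function.support a), ((s.1 v * a v : ℤ) : ℝ) * ((s.1 w * a w : ℤ) : ℝ) =
      Nat.card (gauge N (Function.support a)) * orbitProd N v w a := by
  classical
  calc _ = (∑ s, signHom N (Function.support a) v w s) * (a v * a w : ℝ) := by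
        rw [Finset.sum_mul]
        refine Finset.sum_congr rfl fun s _ => ?_
        rw [signHom_apply]; push_cast; ring
    _ = _ := by
        rw [sum_hom_units, orbitProd, Nat.card_eq_fintype_card]
        split_ifs <;> simp

open Classical in
/-- The absolute values of configurations. -/
noncomputable def amplitudes (H : ℕ) (E N : Finset V) : Finset (V → ℕ) :=
  (configs H E N).image fun h v => (h v).natAbs

lemma mem_amplitudes : a ∈ amplitudes H E N ↔ IsConfig H E N fun v => (a v : ℤ) := by
  simp only [amplitudes, Finset.mem_image, mem_configs]
  refine ⟨?_, fun ha => ⟨_, ha, by simp⟩⟩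
  rintro ⟨h, hh, rfl⟩
  exact hh.natAbs

lemma inf_mem_amplitudes (ha : a ∈ amplitudes H E N) (hb : b ∈ amplitudes H E' N) :
    a ⊓ b ∈ amplitudes H E N := by
  rw [mem_amplitudes] at *
  refine ⟨by simpa [Pi.inf_def] using ha.toIsHeight.inf hb.toIsHeight, ?_, ?_, ?_⟩
  · intro v
    have := ha.bound v
    simp only [Pi.inf_apply]; omega
  · intro v h0 hv
    have := ha.even_eq_zero v h0 hv
    simp only [Pi.inf_apply]; omega
  · intro v h1 hv
    have := ha.odd_eq_one v h1 hv
    have := hb.odd_eq_one v h1 hv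
    simp only [Pi.inf_apply]; omega

lemma sup_mem_amplitudes (hE : E ⊆ E') (ha : a ∈ amplitudes H E N)
    (hb : b ∈ amplitudes H E' N) : a ⊔ b ∈ amplitudes H E' N := by
  rw [mem_amplitudes] at *
  have ha := ha.mono hE subset_rfl
  refine ⟨by simpa [Pi.sup_def] using ha.toIsHeight.sup hb.toIsHeight, ?_, ?_, ?_⟩
  · intro v
    have := ha.bound v; have := hb.bound v
    simp only [Pi.sup_apply]; omega
  · intro v h0 hv
    have := ha.even_eq_zero v h0 hv; have := hb.even_eq_zero v h0 hv
    simp only [Pi.sup_apply]; omega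
  · intro v h1 hv
    have := ha.odd_eq_one v h1 hv; have := hb.odd_eq_one v h1 hv
    simp only [Pi.sup_apply]; omega

lemma isConfig_gauge_mul (ha : a ∈ amplitudes H E N) {s : V → ℤˣ}
    (hs : s ∈ gauge N (Function.support a)) : IsConfig H E N fun v => s v * a v := by
  rw [mem_amplitudes] at ha
  have hsign (u : V) : (s u : ℤ) = 1 ∨ (s u : ℤ) = -1 := Int.isUnit_iff.1 (s u).isUnit
  have hstep {u v : V} (huv : adj u v) (hu : IsEvenV u) :
      ((s u : ℤ) * a u - s v * a v).natAbs = 1 := by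
    have := ha.step huv
    rcases eq_or_ne (a u) 0 with h0 | h0
    · rcases hsign v with hv | hv <;> simp only [hv, h0] at this ⊢ <;> omega
    · rw [hs.2.2 u h0 hu v huv]
      rcases hsign u with hu | hu <;> rw [hu] <;> omega
  refine ⟨⟨fun u v huv => ?_, fun v => (ha.parity v).trans ?_⟩, fun v => ?_, fun v h0 hv => ?_,
    fun v h1 hv => ?_⟩
  · by_cases hu : IsEvenV u
    · exact hstep huv hu
    · rw [← Int.natAbs_neg, neg_sub]
      exact hstep huv.symm (huv.not_isEvenV_iff.1 hu)
  · rcases hsign v with hv | hv <;> rw [hv] <;> omega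
  · have := ha.bound v
    rcases hsign v with hv | hv <;> rw [hv] <;> omega
  · simp [ha.even_eq_zero v h0 hv]
  · simp [ha.odd_eq_one v h1 hv, hs.1 v h1 hv]

lemma gauge_mul_injective (ha : a ∈ amplitudes H E N) :
    Function.Injective fun (s : gauge N (Function.support a)) v => (s.1 v * a v : ℤ) := by
  intro s t hst
  ext v : 2
  rw [s.2.2.1, t.2.2.1]
  have hne : (a (signSite v) : ℤ) ≠ 0 := fun h0 => not_isEvenV_signSite v <|
    ((mem_amplitudes.1 ha).parity (signSite v)).2 (by simp [h0])
  exact Units.ext (mul_right_cancel₀ hne (congrFun hst (signSite v)))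

lemma IsConfig.exists_gauge_mul_eq (hh : IsConfig H E N h) (ha : (fun v => (h v).natAbs) = a) :
    ∃ s ∈ gauge N (Function.support a), (fun v => (s v * a v : ℤ)) = h := by
  subst ha
  refine ⟨fun v => if 0 < h (signSite v) then 1 else -1, ⟨fun o ho hN => ?_, fun v => ?_,
    fun v hv h0 o ho => ?_⟩, funext fun v => ?_⟩
  · simp [signSite_of_not_isEvenV ho, hh.odd_eq_one o ho hN]
  · simp only [signSite_of_not_isEvenV (not_isEvenV_signSite v)]
  · have hright := hh.step (adj_rightNbr v)
    have hstep := hh.step ho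
    have hparity := (hh.parity v).1 h0
    have hne : (h v).natAbs ≠ 0 := hv
    have hsign : 0 < h o ↔ 0 < h (rightNbr v) := by omega
    simp only [signSite_of_isEvenV h0, signSite_of_not_isEvenV (ho.symm.not_isEvenV_iff.2 h0),
      hsign]
  · by_cases hv : IsEvenV v
    · have := (hh.parity v).1 hv
      have := hh.step (adj_rightNbr v)
      simp only [signSite_of_isEvenV hv]
      split_ifs <;> simp only [Units.val_one, Units.val_neg] <;> omega
    · have := (hh.parity v).not.1 hv
      simp only [signSite_of_not_isEvenV hv]
      split_ifs <;> simp only [Units.val_one, Units.val_neg] <;> omega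

lemma sum_configs_eq_sum_amplitudes (f : (V → ℤ) → ℝ) :
    ∑ h ∈ configs H E N, f h =
      ∑ a ∈ amplitudes H E N, ∑ s : gauge N (Function.support a), f fun v => s.1 v * a v := by
  classical
  rw [← Finset.sum_fiberwise_of_maps_to (g := fun h v => (h v).natAbs)
    fun h hh => Finset.mem_image_of_mem _ hh]
  refine Finset.sum_congr rfl fun a ha => (Finset.sum_nbij
    (fun (s : gauge N (Function.support a)) v => (s.1 v * a v : ℤ)) ?_
    (gauge_mul_injective ha).injOn ?_ fun _ _ => rfl).symm
  · simp only [Finset.mem_univ, Finset.mem_filter, mem_configs, forall_true_left]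
    refine fun s => ⟨isConfig_gauge_mul ha s.2, funext fun v => ?_⟩
    simp [Int.natAbs_mul]
  · intro h hh
    simp only [Finset.coe_filter, mem_configs, Set.mem_ofPred_eq] at hh
    obtain ⟨s, hs, rfl⟩ := hh.1.exists_gauge_mul_eq hh.2
    exact ⟨⟨s, hs⟩, by simp⟩

lemma card_configs_eq_sum :
    ((configs H E N).card : ℝ) =
      ∑ a ∈ amplitudes H E N, (Nat.card (gauge N (Function.support a)) : ℝ) := by
  simpa using sum_configs_eq_sum_amplitudes (H := H) (E := E) (N := N) fun _ => 1

lemma sum_evenHeight_mul (hv : IsEvenV v) (hw : IsEvenV w) :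
    ∑ h ∈ configs H E N, evenHeight h v * evenHeight h w =
      ∑ a ∈ amplitudes H E N, Nat.card (gauge N (Function.support a)) * orbitProd N v w a := by
  simp_rw [sum_configs_eq_sum_amplitudes, evenHeight, if_pos hv, if_pos hw, sum_gauge_mul]

theorem cov_mono (H : ℕ) (v w : V) : Monotone fun E => cov H E v w := by
  intro E E' hE
  by_cases hv : IsEvenV v
  swap
  · simp [cov, evenHeight, hv]
  by_cases hw : IsEvenV w
  swap
  · simp [cov, evenHeight, hw]
  set N := nbrs E'
  have hcard (E : Finset V) : (0 : ℝ) < (configs H E N).card := by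
    exact_mod_cast (configs_nonempty H E N).card_pos
  change cov H E v w ≤ cov H E' v w
  rw [cov_eq_expect (nbrs_mono hE), cov, Finset.expect_eq_sum_div_card,
    Finset.expect_eq_sum_div_card, div_le_div_iff₀ (hcard E) (hcard E'),
    mul_comm (∑ h ∈ configs H E' N, _),
    sum_evenHeight_mul hv hw, sum_evenHeight_mul hv hw, card_configs_eq_sum, card_configs_eq_sum]
  refine sum_mul_sum_le_of_logSupermodular (fun _ => Nat.cast_nonneg _) (orbitProd_nonneg N v w)
    (orbitProd_mono N v w) (fun a b => ?_) (fun a ha b hb => inf_mem_amplitudes ha hb)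
    (fun a ha b hb => sup_mem_amplitudes hE ha hb)
  have hinf : Function.support (a ⊓ b) = Function.support a ∩ Function.support b := by
    ext u; simp only [Function.mem_support, Set.mem_inter_iff, Pi.inf_apply]; omega
  have hsup : Function.support (a ⊔ b) = Function.support a ∪ Function.support b := by
    ext u; simp only [Function.mem_support, Set.mem_union, Pi.sup_apply]; omega
  rw [hinf, hsup]
  exact_mod_cast card_gauge_mul_card_le N _ _

end Gauge

section Automorphisms

/-- Graph automorphisms of the square lattice which preserve the parity of vertices. -/
structure IsAut (σ : Equiv.Perm V) : Prop where
  adj_iff : ∀ u v, adj (σ u) (σ v) ↔ adj u v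
  isEvenV_iff : ∀ v, IsEvenV (σ v) ↔ IsEvenV v

variable {σ : Equiv.Perm V} {H : ℕ} {E N : Finset V} {h : V → ℤ}

lemma IsAut.symm (hσ : IsAut σ) : IsAut σ.symm where
  adj_iff u v := by simpa using (hσ.adj_iff (σ.symm u) (σ.symm v)).symm
  isEvenV_iff v := by simpa using (hσ.isEvenV_iff (σ.symm v)).symm

lemma IsAut.isConfig_comp (hσ : IsAut σ)
    (hh : IsConfig H (E.map σ.toEmbedding) (N.map σ.toEmbedding) h) : IsConfig H E N (h ∘ σ) where
  step u v huv := hh.step ((hσ.adj_iff u v).2 huv)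
  parity v := (hσ.isEvenV_iff v).symm.trans (hh.parity (σ v))
  bound v := hh.bound (σ v)
  even_eq_zero v hv hvE := hh.even_eq_zero _ ((hσ.isEvenV_iff v).2 hv) (by simpa using hvE)
  odd_eq_one v hv hvN := hh.odd_eq_one _ ((hσ.isEvenV_iff v).not.2 hv) (by simpa using hvN)

lemma IsAut.evenHeight_comp (hσ : IsAut σ) (h : V → ℤ) (v : V) :
    evenHeight (h ∘ σ) v = evenHeight h (σ v) := by
  simp [evenHeight, hσ.isEvenV_iff]

lemma IsAut.nbrs_map (hσ : IsAut σ) (E : Finset V) :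
    nbrs (E.map σ.toEmbedding) = (nbrs E).map σ.toEmbedding := by
  ext u
  simp only [mem_nbrs, Finset.mem_map_equiv]
  exact σ.symm.exists_congr fun v => by rw [hσ.symm.adj_iff]

lemma IsAut.cov_map (hσ : IsAut σ) (H : ℕ) (E : Finset V) (v w : V) :
    cov H (E.map σ.toEmbedding) (σ v) (σ w) = cov H E v w := by
  rw [cov, cov, hσ.nbrs_map]
  refine Finset.expect_nbij' (· ∘ σ) (· ∘ σ.symm) (fun h hh => ?_) (fun h hh => ?_)
    (fun h _ => by ext; simp) (fun h _ => by ext; simp) fun h _ => ?_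
  · exact mem_configs.2 (hσ.isConfig_comp (mem_configs.1 hh))
  · refine mem_configs.2 (hσ.symm.isConfig_comp ?_)
    simpa [Finset.map_map] using hh
  · rw [hσ.evenHeight_comp, hσ.evenHeight_comp]

end Automorphisms

section Green

open Filter Topology

variable {H : ℕ}

/-- The pairing of the even heights of `h` with a finitely supported charge distribution. -/
noncomputable def pairing (h : V → ℤ) : (V →₀ ℝ) →ₗ[ℝ] ℝ :=
  Finsupp.linearCombination ℝ (evenHeight h)

/-- The infinite-volume covariance, which exists by monotonicity in the volume. -/
noncomputable def green (H : ℕ) (v w : V) : ℝ := ⨆ E, cov H E v w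

/-- The bilinear form on charge distributions with kernel `green H`. -/
noncomputable def greenForm (H : ℕ) : LinearMap.BilinForm ℝ (V →₀ ℝ) :=
  Finsupp.linearCombination ℝ fun v => Finsupp.linearCombination ℝ (green H v)

lemma pairing_congr {F : V →₀ ℝ} {g h : V → ℤ} (hgh : Set.EqOn g h F.support) :
    pairing g F = pairing h F := by
  refine Finset.sum_congr rfl fun v hv => ?_
  simp [evenHeight, hgh hv]

lemma abs_evenHeight_le {E N : Finset V} {h : V → ℤ} (hh : IsConfig H E N h) (v : V) :
    |evenHeight h v| ≤ H + 1 := by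
  unfold evenHeight
  split_ifs
  · rw [← Int.cast_abs, Int.abs_eq_natAbs]
    exact_mod_cast hh.bound v
  · rw [abs_zero]; positivity

lemma cov_le_green (E : Finset V) (v w : V) : cov H E v w ≤ green H v w := by
  refine le_ciSup (f := fun E => cov H E v w) ⟨(H + 1) * (H + 1), ?_⟩ E
  rintro _ ⟨E, rfl⟩
  refine Finset.expect_le (configs_nonempty _ _ _) fun h hh => (le_abs_self _).trans ?_
  have hh := mem_configs.1 hh
  rw [abs_mul]
  gcongr <;> exact abs_evenHeight_le hh _

lemma tendsto_cov (v w : V) : Tendsto (fun E => cov H E v w) atTop (𝓝 (green H v w)) :=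
  tendsto_atTop_ciSup (cov_mono H v w) ⟨green H v w, by rintro _ ⟨E, rfl⟩; exact cov_le_green E v w⟩

lemma greenForm_single (v w : V) (a b : ℝ) :
    greenForm H (Finsupp.single v a) (Finsupp.single w b) = a * (b * green H v w) := by
  simp [greenForm]

theorem tendsto_expect_pairing_mul (F F' : V →₀ ℝ) :
    Tendsto (fun E => 𝔼 h ∈ configs H E (nbrs E), pairing h F * pairing h F') atTop
      (𝓝 (greenForm H F F')) := by
  induction F using Finsupp.induction_linear with
  | zero => simp
  | add F₁ F₂ h₁ h₂ =>
    simpa only [map_add, LinearMap.add_apply, add_mul, Finset.expect_add_distrib] using h₁.add h₂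
  | single v a =>
    induction F' using Finsupp.induction_linear with
    | zero => simp
    | add F₁ F₂ h₁ h₂ =>
      simpa only [map_add, mul_add, Finset.expect_add_distrib] using h₁.add h₂
    | single w b =>
      rw [greenForm_single]
      refine (((tendsto_cov v w).const_mul b).const_mul a).congr fun E => ?_
      simp only [cov, Finset.mul_expect, pairing, Finsupp.linearCombination_single, smul_eq_mul]
      exact Finset.expect_congr rfl fun h _ => by ring

theorem isPosSemidef_greenForm (H : ℕ) : (greenForm H).IsPosSemidef where
  eq F F' := by
    refine tendsto_nhds_unique (tendsto_expect_pairing_mul F F') ?_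
    simpa only [RingHom.id_apply, mul_comm] using tendsto_expect_pairing_mul F' F
  nonneg F := ge_of_tendsto' (tendsto_expect_pairing_mul F F) fun E =>
    Finset.expect_nonneg fun h _ => mul_self_nonneg _

lemma greenForm_self_le {F : V →₀ ℝ} {c : ℝ}
    (hF : ∀ E N h, IsConfig H E N h → pairing h F * pairing h F ≤ c) : greenForm H F F ≤ c :=
  le_of_tendsto' (tendsto_expect_pairing_mul F F) fun _ =>
    Finset.expect_le (configs_nonempty _ _ _) fun h hh => hF _ _ h (mem_configs.1 hh)

/-- The push-forward of charge distributions. -/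
noncomputable def pushforward : Equiv.Perm V →* Module.End ℝ (V →₀ ℝ) where
  toFun σ := Finsupp.lmapDomain ℝ ℝ σ
  map_one' := Finsupp.lmapDomain_id ℝ ℝ
  map_mul' σ τ := Finsupp.lmapDomain_comp ℝ ℝ τ σ

@[simp] lemma pushforward_single (σ : Equiv.Perm V) (v : V) (a : ℝ) :
    pushforward σ (Finsupp.single v a) = Finsupp.single (σ v) a :=
  Finsupp.mapDomain_single

lemma pushforward_congr {S : Set V} {σ τ : Equiv.Perm V} (h : Set.EqOn σ τ S) {F : V →₀ ℝ}
    (hF : F ∈ Finsupp.supported ℝ ℝ S) : pushforward σ F = pushforward τ F :=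
  Finsupp.mapDomain_congr fun _ hv => h (hF hv)

lemma pushforward_mem_supported {S S' : Set V} {σ : Equiv.Perm V} (h : Set.MapsTo σ S S')
    {F : V →₀ ℝ} (hF : F ∈ Finsupp.supported ℝ ℝ S) :
    pushforward σ F ∈ Finsupp.supported ℝ ℝ S' := by
  refine Finsupp.supported_mono h.image_subset ?_
  rw [← Finsupp.lmapDomain_supported]
  exact Submodule.mem_map_of_mem hF

variable {σ : Equiv.Perm V}

lemma IsAut.pairing_pushforward (hσ : IsAut σ) (h : V → ℤ) (F : V →₀ ℝ) :
    pairing h (pushforward σ F) = pairing (h ∘ σ) F := by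
  have : pairing h ∘ₗ pushforward σ = pairing (h ∘ σ) := by
    ext v; simp [pairing, hσ.evenHeight_comp]
  exact LinearMap.congr_fun this F

lemma IsAut.green_map (hσ : IsAut σ) (v w : V) : green H (σ v) (σ w) = green H v w := by
  rw [green, ← σ.finsetCongr.iSup_comp]
  simp only [Equiv.finsetCongr_apply, hσ.cov_map, green]

lemma IsAut.greenForm_pushforward (hσ : IsAut σ) (F F' : V →₀ ℝ) :
    greenForm H (pushforward σ F) (pushforward σ F') = greenForm H F F' := by
  have : (greenForm H).compl₁₂ (pushforward σ) (pushforward σ) = greenForm H := by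
    ext v w; simp [greenForm_single, hσ.green_map]
  exact LinearMap.congr_fun₂ this F F'

end Green

section Mirrors

open Filter Topology

lemma IsConfig.piecewise {H : ℕ} {E N : Finset V} {p q : V → ℤ} {L : Set V}
    [DecidablePred (· ∈ L)] (hp : IsConfig H E N p) (hq : IsConfig H E N q)
    (hpq : ∀ u ∈ L, ∀ v ∉ L, adj u v → p u = q u) : IsConfig H E N (L.piecewise p q) where
  step u v huv := by
    by_cases hu : u ∈ L <;> by_cases hv : v ∈ L
    · simpa [hu, hv] using hp.step huv
    · simpa [hu, hv, hpq u hu v hv huv] using hq.step huv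
    · simpa [hu, hv, hpq v hv u hu huv.symm] using hq.step huv
    · simpa [hu, hv] using hq.step huv
  parity v := by
    by_cases hv : v ∈ L <;>
      simp only [Set.piecewise, hv, if_true, if_false, hp.parity v, ← hq.parity v]
  bound v := by by_cases hv : v ∈ L <;> simp [hv, hp.bound v, hq.bound v]
  even_eq_zero v hv hvE := by
    by_cases hvL : v ∈ L <;> simp [hvL, hp.even_eq_zero v hv hvE, hq.even_eq_zero v hv hvE]
  odd_eq_one v hv hvN := by
    by_cases hvL : v ∈ L <;> simp [hvL, hp.odd_eq_one v hv hvN, hq.odd_eq_one v hv hvN]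

lemma IsEvenV.zsmul {w : V} (hw : IsEvenV w) (k : ℤ) : IsEvenV (k • w) := by
  rw [IsEvenV, Prod.smul_fst, Prod.smul_snd, smul_eq_mul, smul_eq_mul, ← mul_add]
  exact hw.mul_left k

lemma isAut_addRight {w : V} (hw : IsEvenV w) : IsAut (Equiv.addRight w) where
  adj_iff u v := by simp [adj]
  isEvenV_iff v := by
    simp only [isEvenV_iff, Equiv.coe_addRight, Prod.fst_add, Prod.snd_add] at *
    omega

/-- A family of parallel mirrors `{v | level v = a}`. The reflection in such a mirror moves a vertex
along `normal`, by as many steps as its level differs from `a`. -/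
structure MirrorFamily where
  level : V →+ ℤ
  normal : V
  level_normal : level normal = 2
  isEvenV_normal : IsEvenV normal
  level_adj : ∀ u v, adj u v → (level u - level v).natAbs ≤ 1
  adj_reflect : ∀ u v, adj u v → adj (u - level u • normal) (v - level v • normal)

namespace MirrorFamily

variable (M : MirrorFamily) {H : ℕ} {a : ℤ} {F G : V →₀ ℝ}

lemma reflect_involutive (a : ℤ) :
    Function.Involutive fun v => v + (a - M.level v) • M.normal := fun v => by
  simp only [map_add, map_zsmul, M.level_normal, smul_eq_mul]
  module

/-- The reflection in the mirror at level `a`. -/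
def reflect (a : ℤ) : Equiv.Perm V := (M.reflect_involutive a).toPerm

lemma reflect_apply (a : ℤ) (v : V) : M.reflect a v = v + (a - M.level v) • M.normal := rfl

lemma reflect_reflect (a : ℤ) (v : V) : M.reflect a (M.reflect a v) = v :=
  M.reflect_involutive a v

lemma level_reflect (a : ℤ) (v : V) : M.level (M.reflect a v) = 2 * a - M.level v := by
  simp only [reflect_apply, map_add, map_zsmul, M.level_normal, smul_eq_mul]
  ring

lemma reflect_eq_self_iff {v : V} : M.reflect a v = v ↔ M.level v = a := by
  refine ⟨fun h => ?_, fun h => by simp [reflect_apply, h]⟩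
  have := M.level_reflect a v
  rw [h] at this
  omega

lemma isAut_reflect (a : ℤ) : IsAut (M.reflect a) := by
  have hadj (u v : V) (huv : adj u v) : adj (M.reflect a u) (M.reflect a v) := by
    have hv (v : V) : M.reflect a v = v - M.level v • M.normal + a • M.normal := by
      rw [reflect_apply]
      module
    rw [hv, hv]
    exact ((isAut_addRight (M.isEvenV_normal.zsmul a)).adj_iff _ _).2 (M.adj_reflect u v huv)
  refine ⟨fun u v => ⟨fun h => ?_, hadj u v⟩, fun v => ?_⟩
  · simpa only [reflect_reflect] using hadj _ _ h
  · exact (isAut_addRight (M.isEvenV_normal.zsmul _)).isEvenV_iff v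

lemma pushforward_reflect_reflect (a : ℤ) (F : V →₀ ℝ) :
    pushforward (M.reflect a) (pushforward (M.reflect a) F) = F := by
  rw [← Module.End.mul_apply, ← map_mul,
    show M.reflect a * M.reflect a = 1 from Equiv.ext (M.reflect_reflect a), map_one,
    Module.End.one_apply]

lemma sum_pairing_mul_nonneg (hF : F ∈ Finsupp.supported ℝ ℝ {v | M.level v ≤ a}) {E : Finset V}
    (hE : E.map (M.reflect a).toEmbedding = E) :
    0 ≤ ∑ h ∈ configs H E (nbrs E), pairing h F * pairing (h ∘ M.reflect a) F := by
  refine sum_mul_comp_nonneg (θ := M.reflect a) (L := {v | M.level v ≤ a})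
    (f := fun h => pairing h F) (M.reflect_involutive a) (fun v hv => ?_) (fun v hv hv' => ?_)
    (fun h hh => ?_) (fun p hp q hq hpq => ?_) fun g h hgh => pairing_congr (hgh.mono hF)
  · simp only [Set.mem_ofPred_eq, level_reflect] at *
    omega
  · simp only [Set.mem_ofPred_eq, level_reflect] at *
    exact M.reflect_eq_self_iff.2 (by omega)
  · refine mem_configs.2 ((M.isAut_reflect a).isConfig_comp ?_)
    rw [← (M.isAut_reflect a).nbrs_map, hE]
    exact mem_configs.1 hh
  · refine mem_configs.2 ((mem_configs.1 hp).piecewise (mem_configs.1 hq) fun u hu v hv huv => ?_)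
    have := M.level_adj u v huv
    simp only [Set.mem_ofPred_eq] at hu hv
    exact hpq u (M.reflect_eq_self_iff.2 (by omega))

theorem greenForm_pushforward_reflect_nonneg
    (hF : F ∈ Finsupp.supported ℝ ℝ {v | M.level v ≤ a}) :
    0 ≤ greenForm H F (pushforward (M.reflect a) F) := by
  have hlim : Tendsto (fun E : Finset V => E ∪ E.map (M.reflect a).toEmbedding) atTop atTop :=
    tendsto_atTop_mono (fun _ => Finset.subset_union_left) tendsto_id
  refine ge_of_tendsto' ((tendsto_expect_pairing_mul F _).comp hlim) fun E => ?_
  simp only [Function.comp_apply, (M.isAut_reflect a).pairing_pushforward]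
  rw [Finset.expect_eq_sum_div_card]
  refine div_nonneg (M.sum_pairing_mul_nonneg hF ?_) (Nat.cast_nonneg _)
  have hmap : (E.map (M.reflect a).toEmbedding).map (M.reflect a).toEmbedding = E := by
    ext v
    rw [Finset.mem_map_equiv, Finset.mem_map_equiv, reflect, Function.Involutive.toPerm_symm]
    exact iff_of_eq (congrArg (· ∈ E) (M.reflect_reflect a v))
  rw [Finset.map_union, hmap, Finset.union_comm]

theorem two_mul_greenForm_le (hF : F ∈ Finsupp.supported ℝ ℝ {v | M.level v ≤ a})
    (hG : G ∈ Finsupp.supported ℝ ℝ {v | a ≤ M.level v}) :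
    2 * greenForm H F G ≤ greenForm H F (pushforward (M.reflect a) F) +
      greenForm H G (pushforward (M.reflect a) G) := by
  have hθ := M.isAut_reflect a
  have hG' : pushforward (M.reflect a) G ∈ Finsupp.supported ℝ ℝ {v | M.level v ≤ a} :=
    pushforward_mem_supported (fun v hv => by
      simp only [Set.mem_ofPred_eq, level_reflect] at *; omega) hG
  have hpos := M.greenForm_pushforward_reflect_nonneg (H := H) (sub_mem hF hG')
  have hFG : greenForm H (pushforward (M.reflect a) G) (pushforward (M.reflect a) F) =
      greenForm H F G := by
    rw [hθ.greenForm_pushforward]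
    exact (isPosSemidef_greenForm H).eq _ _
  have hGG : greenForm H (pushforward (M.reflect a) G) G =
      greenForm H G (pushforward (M.reflect a) G) := (isPosSemidef_greenForm H).eq _ _
  simp only [map_sub, LinearMap.sub_apply, pushforward_reflect_reflect] at hpos
  linarith

end MirrorFamily

end Mirrors

section Dipoles

variable {H : ℕ} {F : V →₀ ℝ}

namespace MirrorFamily

variable (M : MirrorFamily) {a b : ℤ}

/-- The translation by the normal vector of a family of mirrors. -/
def shift : Equiv.Perm V := Equiv.addRight M.normal

lemma shift_apply (v : V) : M.shift v = v + M.normal := rfl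

lemma shift_zpow_apply (k : ℤ) (v : V) : (M.shift ^ k) v = v + k • M.normal := by
  simp [shift]

lemma isAut_shift_zpow (k : ℤ) : IsAut (M.shift ^ k) := by
  rw [show M.shift ^ k = Equiv.addRight (k • M.normal) from Equiv.ext (M.shift_zpow_apply k)]
  exact isAut_addRight (M.isEvenV_normal.zsmul k)

/-- The charge distribution with charges `F` and opposite charges on the translate of `F` by the
normal vector. -/
noncomputable def dipole : Module.End ℝ (V →₀ ℝ) := 1 - pushforward M.shift

lemma dipole_apply (F : V →₀ ℝ) : M.dipole F = F - pushforward M.shift F := rfl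

lemma dipole_mem_supported (hF : F ∈ Finsupp.supported ℝ ℝ {v | M.level v = b}) :
    M.dipole F ∈ Finsupp.supported ℝ ℝ {v | b ≤ M.level v ∧ M.level v ≤ b + 2} := by
  refine sub_mem (Finsupp.supported_mono (fun v hv => ?_) hF)
    (pushforward_mem_supported (fun v hv => ?_) hF)
  all_goals simp only [Set.mem_ofPred_eq, shift_apply, map_add, level_normal] at *; omega

lemma pushforward_reflect_dipole (hF : F ∈ Finsupp.supported ℝ ℝ {v | M.level v = b}) :
    pushforward (M.reflect a) (M.dipole F) = -pushforward (M.shift ^ (a - b - 1)) (M.dipole F) := by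
  have hF₁ : pushforward (M.reflect a) F = pushforward (M.shift ^ (a - b - 1) * M.shift) F := by
    refine pushforward_congr (fun v hv => ?_) hF
    simp only [Set.mem_ofPred_eq] at hv
    rw [← zpow_add_one, shift_zpow_apply, reflect_apply, hv, sub_add_cancel]
  have hF₂ : pushforward (M.reflect a * M.shift) F = pushforward (M.shift ^ (a - b - 1)) F := by
    refine pushforward_congr (fun v hv => ?_) hF
    simp only [Set.mem_ofPred_eq] at hv
    simp only [Equiv.Perm.mul_apply, shift_zpow_apply, reflect_apply, shift_apply, map_add, hv,
      level_normal]
    module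
  rw [map_mul] at hF₁ hF₂
  rw [dipole_apply, map_sub, map_sub, hF₁, ← Module.End.mul_apply, hF₂, Module.End.mul_apply]
  abel

lemma greenForm_dipole_reflect (hF : F ∈ Finsupp.supported ℝ ℝ {v | M.level v = b}) {n : ℕ}
    (hn : (a - b - 1).natAbs = n) :
    greenForm H (M.dipole F) (pushforward (M.reflect a) (M.dipole F)) =
      -greenForm H (M.dipole F) ((pushforward M.shift ^ n) (M.dipole F)) := by
  rw [M.pushforward_reflect_dipole hF, map_neg, ← map_pow, ← zpow_natCast]
  rcases Int.natAbs_eq (a - b - 1) with hk | hk <;> rw [hk, hn]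
  generalize M.dipole F = G
  have hsymm := (isPosSemidef_greenForm H).eq (pushforward (M.shift ^ (n : ℤ)) G) G
  rw [← (M.isAut_shift_zpow (-n)).greenForm_pushforward, ← Module.End.mul_apply, ← map_mul,
    ← zpow_add, neg_add_cancel, zpow_zero, map_one] at hsymm
  exact congrArg Neg.neg hsymm

theorem greenForm_sum_dipole_le {Y : ℕ → V →₀ ℝ}
    (hY : ∀ i : ℕ, Y i ∈ Finsupp.supported ℝ ℝ {v | M.level v = b + 2 * i}) (s : Finset ℕ) :
    greenForm H (∑ i ∈ s, M.dipole (Y i)) (∑ i ∈ s, M.dipole (Y i)) ≤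
      2 * ∑ i ∈ s, greenForm H (M.dipole (Y i)) (M.dipole (Y i)) := by
  have hsupp (i : ℕ) := M.dipole_mem_supported (hY i)
  refine apply_sum_self_le (isPosSemidef_greenForm H)
    (fun x y => IsAut.greenForm_pushforward (isAut_addRight M.isEvenV_normal) x y)
    (fun i => M.dipole_apply (Y i)) (fun i r => ?_) (fun i j hij => ?_) s
  · have hpos := M.greenForm_pushforward_reflect_nonneg (H := H) (a := b + 2 * i + (r + 2))
      (Finsupp.supported_mono (fun v hv => by simp only [Set.mem_ofPred_eq] at *; omega) (hsupp i))
    rw [M.greenForm_dipole_reflect (a := b + 2 * i + (r + 2)) (n := r + 1) (hY i)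
      (by omega)] at hpos
    exact neg_nonneg.1 hpos
  · have hle := M.two_mul_greenForm_le (H := H) (a := b + i + j + 1)
      (Finsupp.supported_mono (fun v hv => by simp only [Set.mem_ofPred_eq] at *; omega) (hsupp i))
      (Finsupp.supported_mono (fun v hv => by simp only [Set.mem_ofPred_eq] at *; omega) (hsupp j))
    rwa [M.greenForm_dipole_reflect (a := b + i + j + 1) (n := j - i) (hY i) (by omega),
      M.greenForm_dipole_reflect (a := b + i + j + 1) (n := j - i) (hY j) (by omega),
      ← sub_eq_add_neg] at hle

end MirrorFamily

end Dipoles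

section Infrared

variable {H : ℕ} {σ : Equiv.Perm V}

/-- The electrostatic energy of a charge distribution. -/
noncomputable def energy (H : ℕ) (F : V →₀ ℝ) : ℝ := greenForm H F F

lemma energy_nonneg (F : V →₀ ℝ) : 0 ≤ energy H F := (isPosSemidef_greenForm H).nonneg F

lemma energy_smul (c : ℝ) (F : V →₀ ℝ) : energy H (c • F) = c ^ 2 * energy H F := by
  simp only [energy, map_smul, LinearMap.smul_apply, smul_eq_mul]
  ring

lemma energy_add_add_energy_sub (F G : V →₀ ℝ) :
    energy H (F + G) + energy H (F - G) = 2 * (energy H F + energy H G) := by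
  simp only [energy, map_add, map_sub, LinearMap.add_apply, LinearMap.sub_apply]
  ring

lemma energy_sub_le (F G : V →₀ ℝ) : energy H (F - G) ≤ 2 * (energy H F + energy H G) := by
  linarith [energy_add_add_energy_sub (H := H) F G, energy_nonneg (H := H) (F + G)]

lemma energy_add_le (F G : V →₀ ℝ) : energy H (F + G) ≤ 2 * (energy H F + energy H G) := by
  linarith [energy_add_add_energy_sub (H := H) F G, energy_nonneg (H := H) (F - G)]

lemma IsAut.energy_pushforward (hσ : IsAut σ) (F : V →₀ ℝ) :
    energy H (pushforward σ F) = energy H F := hσ.greenForm_pushforward F F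

namespace MirrorFamily

/-- The vertical mirrors. -/
def vertical : MirrorFamily where
  level := AddMonoidHom.fst ℤ ℤ
  normal := (2, 0)
  level_normal := rfl
  isEvenV_normal := by decide
  level_adj u v huv := by simp only [adj, AddMonoidHom.coe_fst] at *; omega
  adj_reflect u v huv := by simp [adj] at *; omega

/-- The mirrors in direction `(1, -1)`. -/
def diagonal : MirrorFamily where
  level := AddMonoidHom.fst ℤ ℤ + AddMonoidHom.snd ℤ ℤ
  normal := (1, 1)
  level_normal := rfl
  isEvenV_normal := by decide
  level_adj u v huv := by simp [adj] at *; omega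
  adj_reflect u v huv := by simp [adj] at *; omega

lemma vertical_reflect_apply (a : ℤ) (v : V) : vertical.reflect a v = (2 * a - v.1, v.2) := by
  ext <;> simp [reflect_apply, vertical]
  ring

end MirrorFamily

open MirrorFamily

/-- The unit charge at `v`. -/
noncomputable abbrev unitCharge (v : V) : V →₀ ℝ := Finsupp.single v 1

/-- The points of a sublattice all of whose vertices are even. -/
def gridPoint (i j : ℕ) : V := (2 * i, 2 * j)

lemma isEvenV_gridPoint (i j : ℕ) : IsEvenV (gridPoint i j) :=
  isEvenV_iff.2 (by simp only [gridPoint]; omega)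

lemma energy_diagonal_dipole_unitCharge_le {v : V} (hv : IsEvenV v) :
    energy H (diagonal.dipole (unitCharge v)) ≤ 4 := by
  have hw : IsEvenV (diagonal.shift v) := by
    simpa using (diagonal.isAut_shift_zpow 1).isEvenV_iff v |>.2 hv
  refine greenForm_self_le fun E N h hh => ?_
  have hstep := hh.step (show adj v (v.1 + 1, v.2) by simp [adj])
  have hstep' := hh.step (show adj (v.1 + 1, v.2) (diagonal.shift v) by
    simp [adj, shift_apply, diagonal])
  have hle : |h v - h (diagonal.shift v)| ≤ (2 : ℤ) := by
    rw [Int.abs_eq_natAbs]; omega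
  have hle' : |(h v : ℝ) - h (diagonal.shift v)| ≤ 2 := by exact_mod_cast hle
  simp only [dipole_apply, map_sub, pushforward_single, pairing, evenHeight,
    Finsupp.linearCombination_single, one_smul, if_pos hv, if_pos hw]
  nlinarith [abs_le.1 hle']

lemma energy_sum_diagonal_dipole_le (i : ℕ) (s : Finset ℕ) (f : ℕ → ℝ) :
    energy H (∑ j ∈ s, diagonal.dipole (f j • unitCharge (gridPoint i j))) ≤
      8 * ∑ j ∈ s, f j ^ 2 := by
  refine (diagonal.greenForm_sum_dipole_le (b := 2 * i)
    (Y := fun j => f j • unitCharge (gridPoint i j)) (fun j => ?_) s).trans ?_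
  · refine Submodule.smul_mem _ _ (Finsupp.single_mem_supported ℝ _ ?_)
    simp [diagonal, gridPoint]
  · rw [show (8 : ℝ) = 2 * 4 by norm_num, mul_assoc, Finset.mul_sum _ _ 4]
    gcongr with j
    rw [map_smul, ← energy, energy_smul, mul_comm 4]
    gcongr
    exact energy_diagonal_dipole_unitCharge_le (isEvenV_gridPoint i j)

/-- A horizontal dipole is the difference between a diagonal dipole and its mirror image. -/
lemma energy_vertical_dipole_le (i : ℕ) (s : Finset ℕ) (f : ℕ → ℝ) :
    energy H (vertical.dipole (∑ j ∈ s, f j • unitCharge (gridPoint i j))) ≤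
      32 * ∑ j ∈ s, f j ^ 2 := by
  set D := ∑ j ∈ s, diagonal.dipole (f j • unitCharge (gridPoint i j)) with hD
  have hsub : vertical.dipole (∑ j ∈ s, f j • unitCharge (gridPoint i j)) =
      D - pushforward (vertical.reflect (2 * i + 1)) D := by
    have hv (j : ℕ) : vertical.reflect (2 * i + 1) (gridPoint i j) =
        vertical.shift (gridPoint i j) := by
      rw [vertical_reflect_apply, shift_apply]
      ext <;> simp [gridPoint, vertical]
      ring
    have hw (j : ℕ) : vertical.reflect (2 * i + 1) (diagonal.shift (gridPoint i j)) =
        diagonal.shift (gridPoint i j) := by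
      rw [vertical_reflect_apply, shift_apply]
      ext <;> simp [gridPoint, diagonal]
      ring
    simp only [hD, dipole_apply, map_sum, map_smul, map_sub, pushforward_single, hv, hw,
      ← Finset.sum_sub_distrib]
    exact Finset.sum_congr rfl fun j _ => by module
  rw [hsub]
  refine (energy_sub_le _ _).trans ?_
  rw [(vertical.isAut_reflect _).energy_pushforward]
  linarith [energy_sum_diagonal_dipole_le (H := H) i s f]

/-- The infrared bound: dipoles at different places are orthogonal up to a constant factor. -/
theorem energy_sum_horizontal_le (s : Finset ℕ) (t : ℕ → Finset ℕ) (f : ℕ → ℕ → ℝ) :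
    energy H (∑ i ∈ s, ∑ j ∈ t i,
      f i j • (unitCharge (gridPoint i j) - unitCharge (gridPoint (i + 1) j))) ≤
      64 * ∑ i ∈ s, ∑ j ∈ t i, f i j ^ 2 := by
  have hdipole (i : ℕ) : ∑ j ∈ t i,
      f i j • (unitCharge (gridPoint i j) - unitCharge (gridPoint (i + 1) j)) =
      vertical.dipole (∑ j ∈ t i, f i j • unitCharge (gridPoint i j)) := by
    have hv (j : ℕ) : vertical.shift (gridPoint i j) = gridPoint (i + 1) j := by
      ext <;> simp [shift_apply, gridPoint, vertical]
      ring
    simp only [map_sum, map_smul, dipole_apply, pushforward_single, hv]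
  simp only [hdipole]
  refine (vertical.greenForm_sum_dipole_le (b := 0) (fun i => ?_) s).trans ?_
  · refine sum_mem fun j _ => Submodule.smul_mem _ _ (Finsupp.single_mem_supported ℝ _ ?_)
    simp [vertical, gridPoint]
  · rw [show (64 : ℝ) = 2 * 32 by norm_num, mul_assoc, Finset.mul_sum s _ 32]
    gcongr with i
    exact energy_vertical_dipole_le i (t i) (f i)

lemma isAut_prodComm : IsAut (Equiv.prodComm ℤ ℤ) where
  adj_iff u v := by simp [adj, add_comm]
  isEvenV_iff v := by simp [IsEvenV, add_comm]

theorem energy_sum_vertical_le (n : ℕ) (f : ℕ → ℕ → ℝ) :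
    energy H (∑ i ∈ Finset.range n, ∑ j ∈ Finset.range (i + 1),
      f i j • (unitCharge (gridPoint i j) - unitCharge (gridPoint i (j + 1)))) ≤
      64 * ∑ i ∈ Finset.range n, ∑ j ∈ Finset.range (i + 1), f i j ^ 2 := by
  have hcomm (i j : ℕ) : i ∈ Finset.range n ∧ j ∈ Finset.range (i + 1) ↔
      i ∈ Finset.Ico j n ∧ j ∈ Finset.range n := by
    simp only [Finset.mem_range, Finset.mem_Ico]; omega
  have hswap (i j : ℕ) : Equiv.prodComm ℤ ℤ (gridPoint i j) = gridPoint j i := rfl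
  rw [Finset.sum_comm' hcomm, Finset.sum_comm' hcomm, ← isAut_prodComm.energy_pushforward]
  simp only [map_sum, map_smul, map_sub, pushforward_single, hswap]
  exact energy_sum_horizontal_le (Finset.range n) (Finset.Ico · n) fun j i => f i j

end Infrared

section Flow

open MirrorFamily

variable {H : ℕ}

/-- The uniform charge distribution of total charge `1` on the lowest `m` points of column `i`. -/
noncomputable def columnAvg (i m : ℕ) : V →₀ ℝ :=
  (m : ℝ)⁻¹ • ∑ j ∈ Finset.range m, unitCharge (gridPoint i j)

lemma columnAvg_sub_columnAvg_succ_length (i m : ℕ) :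
    columnAvg i (m + 1) - columnAvg i (m + 2) = ∑ j ∈ Finset.range (m + 1),
      ((j + 1) / ((m + 1) * (m + 2)) : ℝ) •
        (unitCharge (gridPoint i j) - unitCharge (gridPoint i (j + 1))) := by
  have hcoeff (j : ℕ) : ((j + 1) / ((m + 1) * (m + 2)) : ℝ) =
      ((m + 1) * (m + 2) : ℝ)⁻¹ * (j + 1) := by
    field_simp
  simp only [hcoeff, mul_smul, ← Finset.smul_sum, columnAvg]
  rw [sum_range_succ_smul_sub_succ ℝ fun j => unitCharge (gridPoint i j),
    Finset.sum_range_succ _ (m + 1)]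
  push_cast
  match_scalars <;> field_simp; ring

lemma columnAvg_sub_columnAvg_succ (i m : ℕ) :
    columnAvg i m - columnAvg (i + 1) m = ∑ j ∈ Finset.range m,
      (m : ℝ)⁻¹ • (unitCharge (gridPoint i j) - unitCharge (gridPoint (i + 1) j)) := by
  simp only [columnAvg, ← Finset.smul_sum, Finset.sum_sub_distrib, smul_sub]

/-- Widening the column while moving it away spreads the unit flow from the apex of a triangle to
its opposite side, at a cost of order `1 / i` in column `i`. -/
theorem energy_columnAvg_sub_le (n : ℕ) :
    energy H (columnAvg 0 1 - columnAvg n (n + 1)) ≤ 256 * (harmonic n : ℝ) := by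
  have hharmonic : (harmonic n : ℝ) = ∑ i ∈ Finset.range n, ((i + 1 : ℕ) : ℝ)⁻¹ := by
    simp [harmonic]
  rw [← Finset.sum_range_sub' fun i => columnAvg i (i + 1)]
  have hsplit : ∑ i ∈ Finset.range n, (columnAvg i (i + 1) - columnAvg (i + 1) (i + 1 + 1)) =
      ∑ i ∈ Finset.range n, (columnAvg i (i + 1) - columnAvg i (i + 2)) +
        ∑ i ∈ Finset.range n, (columnAvg i (i + 2) - columnAvg (i + 1) (i + 2)) := by
    rw [← Finset.sum_add_distrib]
    exact Finset.sum_congr rfl fun i _ => (sub_add_sub_cancel _ _ _).symm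
  simp only [columnAvg_sub_columnAvg_succ_length, columnAvg_sub_columnAvg_succ] at hsplit
  rw [hsplit]
  have hvert := energy_sum_vertical_le (H := H) n fun i j => (j + 1) / ((i + 1) * (i + 2))
  have hhoriz := energy_sum_horizontal_le (H := H) (Finset.range n) (fun i => Finset.range (i + 2))
    fun i _ => ((i + 2 : ℕ) : ℝ)⁻¹
  have hvert' := Finset.sum_le_sum fun i (_ : i ∈ Finset.range n) => sum_range_sq_div_le i
  have hhoriz' := Finset.sum_le_sum fun i (_ : i ∈ Finset.range n) => sum_range_inv_sq_le i
  rw [← hharmonic] at hvert' hhoriz'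
  refine (energy_add_le _ _).trans ?_
  linarith

theorem energy_unitCharge_sub_le (n : ℕ) {o : V} (ho : IsEvenV o) :
    energy H (unitCharge o - unitCharge (o + (4 * (n : ℤ), 0))) ≤ 1024 * (harmonic n : ℝ) := by
  have htranslate : unitCharge o - unitCharge (o + (4 * (n : ℤ), 0)) =
      pushforward (Equiv.addRight o) (unitCharge (0, 0) - unitCharge (4 * (n : ℤ), 0)) := by
    simp only [map_sub, pushforward_single, Equiv.coe_addRight, Prod.mk_zero_zero, zero_add,
      add_comm o]
  rw [htranslate, (isAut_addRight ho).energy_pushforward]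
  set F := columnAvg 0 1 - columnAvg n (n + 1) with hF
  have hreflect : unitCharge (0, 0) - unitCharge (4 * (n : ℤ), 0) =
      F - pushforward (vertical.reflect (2 * n)) F := by
    have hfix (j : ℕ) : vertical.reflect (2 * n) (gridPoint n j) = gridPoint n j := by
      rw [vertical_reflect_apply]
      ext <;> simp [gridPoint]
      ring
    have hstart : vertical.reflect (2 * n) (gridPoint 0 0) = (4 * (n : ℤ), 0) := by
      rw [vertical_reflect_apply]
      ext <;> simp [gridPoint]
      ring
    have horigin : gridPoint 0 0 = (0, 0) := by simp [gridPoint]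
    simp only [hF, columnAvg, map_sub, map_smul, map_sum, pushforward_single, hfix,
      Finset.sum_range_one, hstart]
    rw [horigin]
    module
  rw [hreflect]
  refine (energy_sub_le _ _).trans ?_
  rw [(vertical.isAut_reflect _).energy_pushforward]
  linarith [energy_columnAvg_sub_le (H := H) n]

end Flow

section PinnedShift

variable {H : ℕ} {E N : Finset V} {g h : V → ℤ} {o w : V} {k : ℤ}

/-- Negates all heights except the odd ones outside `N`, which are pinned to `1`. -/
def negFree (N : Finset V) (h : V → ℤ) (v : V) : ℤ := if IsEvenV v ∨ v ∈ N then -h v else h v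

lemma negFree_negFree (N : Finset V) (h : V → ℤ) : negFree N (negFree N h) = h := by
  funext v
  unfold negFree
  split_ifs <;> simp

lemma negFree_of_isEvenV (N : Finset V) (h : V → ℤ) {v : V} (hv : IsEvenV v) :
    negFree N h v = -h v := if_pos (Or.inl hv)

lemma isConfig_negFree (hh : IsConfig H E N h) (hN : nbrs E ⊆ N) :
    IsConfig H E N (negFree N h) where
  step u v huv := by
    have hstep {u v : V} (huv : adj u v) (hu : IsEvenV u) :
        (negFree N h u - negFree N h v).natAbs = 1 := by
      have h1 := hh.step huv
      rw [negFree_of_isEvenV N h hu, negFree]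
      split_ifs with hv
      · omega
      · have hu0 : h u = 0 := hh.even_eq_zero u hu fun huE =>
          hv (Or.inr (hN (mem_nbrs.2 ⟨u, huE, huv.symm⟩)))
        omega
    by_cases hu : IsEvenV u
    · exact hstep huv hu
    · rw [← Int.natAbs_neg, neg_sub]
      exact hstep huv.symm (huv.not_isEvenV_iff.1 hu)
  parity v := (hh.parity v).trans (by unfold negFree; split_ifs <;> omega)
  bound v := by
    have := hh.bound v
    unfold negFree; split_ifs <;> omega
  even_eq_zero v hv hvE := by rw [negFree_of_isEvenV N h hv, hh.even_eq_zero v hv hvE, neg_zero]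
  odd_eq_one v hv hvN := by
    rw [negFree, if_neg (not_or.2 ⟨hv, hvN⟩), hh.odd_eq_one v hv hvN]

/-- The configurations of height `k` at `w`. -/
noncomputable def levelConfigs (H : ℕ) (E N : Finset V) (w : V) (k : ℤ) : Finset (V → ℤ) :=
  (configs H E N).filter (· w = k)

lemma mem_levelConfigs : h ∈ levelConfigs H E N w k ↔ IsConfig H E N h ∧ h w = k := by
  simp [levelConfigs]

lemma levelConfigs_zero (hw : IsEvenV w) : levelConfigs H E N w 0 = configs H (E.erase w) N := by
  ext h
  rw [mem_levelConfigs, mem_configs]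
  constructor
  · rintro ⟨hh, hw0⟩
    refine { hh with even_eq_zero := fun v hv hvE => ?_ }
    rcases eq_or_ne v w with rfl | hvw
    exacts [hw0, hh.even_eq_zero v hv fun h => hvE (Finset.mem_erase.2 ⟨hvw, h⟩)]
  · exact fun hh => ⟨hh.mono (Finset.erase_subset w E) subset_rfl, hh.even_eq_zero w hw (by simp)⟩

lemma sum_levelConfigs_neg (hN : nbrs E ⊆ N) (hw : IsEvenV w) (k : ℤ) (f : (V → ℤ) → ℝ) :
    ∑ h ∈ levelConfigs H E N w (-k), f h = ∑ h ∈ levelConfigs H E N w k, f (negFree N h) := by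
  have hmem (k : ℤ) {h : V → ℤ} (hh : h ∈ levelConfigs H E N w k) :
      negFree N h ∈ levelConfigs H E N w (-k) := by
    rw [mem_levelConfigs] at *
    exact ⟨isConfig_negFree hh.1 hN, by rw [negFree_of_isEvenV N h hw, hh.2]⟩
  refine Finset.sum_nbij' (negFree N) (negFree N) (fun h hh => ?_) (fun h => hmem k)
    (fun h _ => negFree_negFree N h) (fun h _ => negFree_negFree N h)
    fun h _ => by rw [negFree_negFree]
  simpa using hmem (-k) hh

lemma IsHeight.add_const (hh : IsHeight h) (hk : k % 2 = 0) : IsHeight fun v => h v + k where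
  step u v huv := by simpa using hh.step huv
  parity v := (hh.parity v).trans (by omega)

lemma IsConfig.inf_add_const (hg : IsConfig H E N g) (hh : IsConfig H E N h) (hk : 0 ≤ k)
    (hk2 : k % 2 = 0) : IsConfig H E N (g ⊓ fun v => h v + k) where
  toIsHeight := hg.inf (hh.add_const hk2)
  bound v := by have := hg.bound v; have := hh.bound v; simp only [Pi.inf_apply]; omega
  even_eq_zero v hv hvE := by
    simp only [Pi.inf_apply, hg.even_eq_zero v hv hvE, hh.even_eq_zero v hv hvE]; omega
  odd_eq_one v hv hvN := by
    simp only [Pi.inf_apply, hg.odd_eq_one v hv hvN, hh.odd_eq_one v hv hvN]; omega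

lemma IsConfig.sub_const_sup (hg : IsConfig H E N g) (hh : IsConfig H E N h) (hk : 0 ≤ k)
    (hk2 : k % 2 = 0) : IsConfig H E N ((fun v => g v - k) ⊔ h) where
  toIsHeight := by
    simpa only [sub_eq_add_neg] using (hg.add_const (k := -k) (by omega)).sup hh.toIsHeight
  bound v := by have := hg.bound v; have := hh.bound v; simp only [Pi.sup_apply]; omega
  even_eq_zero v hv hvE := by
    simp only [Pi.sup_apply, hg.even_eq_zero v hv hvE, hh.even_eq_zero v hv hvE]; omega
  odd_eq_one v hv hvN := by
    simp only [Pi.sup_apply, hg.odd_eq_one v hv hvN, hh.odd_eq_one v hv hvN]; omega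

/-- Conditionally on height `-k` at `w`, the heights relative to `w` have boundary value `k`, and
hence dominate the heights conditioned to vanish at `w`. -/
lemma sum_levelConfigs_max_sq_mul_card_le (hk : 0 ≤ k) (o w : V) :
    (∑ h ∈ levelConfigs H E N w 0, (max (h o) 0 : ℝ) ^ 2) * (levelConfigs H E N w (-k)).card ≤
      (levelConfigs H E N w 0).card *
        ∑ h ∈ levelConfigs H E N w (-k), (max (h o - h w : ℝ) 0) ^ 2 := by
  let up : (V → ℤ) ↪ (V → ℤ) := ⟨(· + fun _ => k), add_left_injective _⟩
  have hpair {a b : V → ℤ} (ha : a ∈ levelConfigs H E N w 0)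
      (hb : b ∈ levelConfigs H E N w (-k)) :
      a ⊓ up b ∈ levelConfigs H E N w 0 ∧
        a ⊔ up b ∈ (levelConfigs H E N w (-k)).map up := by
    rw [mem_levelConfigs] at ha hb
    have hk2 : k % 2 = 0 := by
      have := (ha.1.parity w).symm.trans (hb.1.parity w); omega
    refine ⟨mem_levelConfigs.2 ⟨ha.1.inf_add_const hb.1 hk hk2, ?_⟩, Finset.mem_map.2
      ⟨_, mem_levelConfigs.2 ⟨ha.1.sub_const_sup hb.1 hk hk2, ?_⟩, ?_⟩⟩
    · simp [up, ha.2, hb.2]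
    · simp [ha.2, hb.2]
    · ext v; simp only [up, Function.Embedding.coeFn_mk, Pi.add_apply, Pi.sup_apply]; omega
  have hmono : Monotone fun h : V → ℤ => (max (h o) 0 : ℝ) ^ 2 := fun g h hgh => by
    have : (g o : ℝ) ≤ h o := by exact_mod_cast hgh o
    dsimp only; gcongr
  have hholley := sum_mul_sum_le_of_logSupermodular (μ := 1)
    (P := levelConfigs H E N w 0) (Q := (levelConfigs H E N w (-k)).map up)
    zero_le_one (fun h => sq_nonneg _) hmono (fun _ _ => le_rfl)
    (fun a ha => Finset.forall_mem_map.2 fun b hb => (hpair ha hb).1)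
    fun a ha => Finset.forall_mem_map.2 fun b hb => (hpair ha hb).2
  have hup : ∑ h ∈ levelConfigs H E N w (-k), (max (h o - h w : ℝ) 0) ^ 2 =
      ∑ h ∈ levelConfigs H E N w (-k), (max (up h o) 0 : ℝ) ^ 2 :=
    Finset.sum_congr rfl fun h hh => by simp [up, (mem_levelConfigs.1 hh).2]
  rw [hup]
  simpa using hholley

lemma sum_levelConfigs_sq_mul_card_le (hN : nbrs E ⊆ N) (ho : IsEvenV o) (hw : IsEvenV w)
    (k : ℤ) :
    (∑ h ∈ levelConfigs H E N w 0, (h o : ℝ) ^ 2) * (levelConfigs H E N w k).card ≤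
      (levelConfigs H E N w 0).card *
        (2 * ∑ h ∈ levelConfigs H E N w k, (h o - h w : ℝ) ^ 2) := by
  wlog hk : k ≤ 0 generalizing k
  · have hneg := this (-k) (by omega)
    have hcard := sum_levelConfigs_neg (H := H) hN hw k fun _ => 1
    simp only [Finset.sum_const, nsmul_eq_mul, mul_one] at hcard
    rw [hcard, sum_levelConfigs_neg hN hw k] at hneg
    simpa only [negFree_of_isEvenV N _ ho, negFree_of_isEvenV N _ hw, Int.cast_neg, neg_sub_neg,
      sub_sq_comm] using hneg
  have hhalf : ∑ h ∈ levelConfigs H E N w 0, (h o : ℝ) ^ 2 =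
      2 * ∑ h ∈ levelConfigs H E N w 0, (max (h o) 0 : ℝ) ^ 2 := by
    have hsymm := sum_levelConfigs_neg (H := H) hN hw 0 fun h => (max (h o) 0 : ℝ) ^ 2
    rw [neg_zero] at hsymm
    rw [two_mul]
    nth_rw 2 [hsymm]
    rw [← Finset.sum_add_distrib]
    refine Finset.sum_congr rfl fun h _ => ?_
    rw [negFree_of_isEvenV N h ho, Int.cast_neg]
    rcases le_total 0 (h o : ℝ) with h0 | h0 <;> simp [h0]
  have hpos := sum_levelConfigs_max_sq_mul_card_le (H := H) (E := E) (N := N) (neg_nonneg.2 hk) o w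
  rw [neg_neg] at hpos
  have hle : ∑ h ∈ levelConfigs H E N w k, (max (h o - h w : ℝ) 0) ^ 2 ≤
      ∑ h ∈ levelConfigs H E N w k, (h o - h w : ℝ) ^ 2 := by
    refine Finset.sum_le_sum fun h _ => ?_
    rcases le_total 0 (h o - h w : ℝ) with h0 | h0
    · rw [max_eq_left h0]
    · rw [max_eq_right h0, zero_pow two_ne_zero]; exact sq_nonneg _
  rw [hhalf]
  linarith [mul_le_mul_of_nonneg_left hle (levelConfigs H E N w 0).card.cast_nonneg]

lemma cov_erase_self_le (ho : IsEvenV o) (hw : IsEvenV w) :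
    cov H (E.erase w) o o ≤
      2 * 𝔼 h ∈ configs H E (nbrs E), (evenHeight h o - evenHeight h w) ^ 2 := by
  have hmaps : ∀ h ∈ configs H E (nbrs E), h w ∈ (configs H E (nbrs E)).image (· w) :=
    fun h hh => Finset.mem_image_of_mem _ hh
  have hsum : (∑ h ∈ levelConfigs H E (nbrs E) w 0, (h o : ℝ) ^ 2) * (configs H E (nbrs E)).card ≤
      (levelConfigs H E (nbrs E) w 0).card *
        (2 * ∑ h ∈ configs H E (nbrs E), (h o - h w : ℝ) ^ 2) := by
    rw [Finset.card_eq_sum_card_fiberwise hmaps, ← Finset.sum_fiberwise_of_maps_to hmaps]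
    push_cast
    simp only [Finset.mul_sum _ _ (2 : ℝ), Finset.mul_sum _ _ (Finset.card _ : ℝ)]
    rw [Finset.mul_sum]
    refine Finset.sum_le_sum fun k _ => ?_
    simpa only [Finset.mul_sum, levelConfigs] using
      sum_levelConfigs_sq_mul_card_le (H := H) (subset_refl (nbrs E)) ho hw k
  rw [levelConfigs_zero hw] at hsum
  have hcard (E N : Finset V) : (0 : ℝ) < (configs H E N).card := by
    exact_mod_cast (configs_nonempty H E N).card_pos
  rw [cov_eq_expect (nbrs_mono (Finset.erase_subset w E)), Finset.expect_eq_sum_div_card,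
    Finset.expect_eq_sum_div_card, mul_div_assoc', div_le_div_iff₀ (hcard _ _) (hcard _ _),
    mul_comm (2 * _)]
  simpa only [evenHeight, if_pos ho, if_pos hw, ← sq] using hsum

open Filter in
/-- Along volumes which contain `w`, the bound of `cov_erase_self_le` tends to the energy. -/
theorem cov_self_le_energy (ho : IsEvenV o) (hw : IsEvenV w) (hwE : w ∉ E) :
    cov H E o o ≤ 2 * energy H (unitCharge o - unitCharge w) := by
  refine ge_of_tendsto ((tendsto_expect_pairing_mul _ _).const_mul 2) ?_
  filter_upwards [eventually_ge_atTop E] with E' hE'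
  have hsub : E ⊆ E'.erase w := Finset.subset_erase.2 ⟨hE', hwE⟩
  refine (cov_mono H o o hsub).trans ((cov_erase_self_le ho hw).trans_eq ?_)
  simp [pairing, sq]

end PinnedShift

section EvenDomains

lemma IsHeight.natAbs_sub_le {h : V → ℤ} (hh : IsHeight h) (v : V) (k : ℕ) :
    (h (v.1 + k, v.2) - h v).natAbs ≤ k := by
  induction k with
  | zero => simp
  | succ k ih =>
    have := hh.step (show adj (v.1 + (k + 1 : ℕ), v.2) (v.1 + k, v.2) by simp only [adj]; omega)
    omega

/-- The heights change by `1` along each edge of a horizontal line leaving the set. -/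
lemma exists_forall_natAbs_le {D : Set V} (hD : D.Finite) :
    ∃ H : ℕ, ∀ h, IsHeight h → Set.EqOn h ground Dᶜ → ∀ v, (h v).natAbs ≤ H + 1 := by
  obtain ⟨K, hK⟩ := (hD.image fun v => v.1.natAbs).bddAbove
  have hground (u : V) : (ground u).natAbs ≤ 1 := by unfold ground; split_ifs <;> simp
  refine ⟨2 * K + 1, fun h hh hout v => ?_⟩
  by_cases hv : v ∈ D
  · have hvK : v.1.natAbs ≤ K := hK (Set.mem_image_of_mem _ hv)
    have hexit : (v.1 + (2 * K + 1 : ℕ), v.2) ∉ D := fun hmem => by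
      have : (v.1 + (2 * K + 1 : ℕ)).natAbs ≤ K := hK (Set.mem_image_of_mem _ hmem)
      omega
    have := hh.natAbs_sub_le v (2 * K + 1)
    have := hground (v.1 + (2 * K + 1 : ℕ), v.2)
    rw [hout hexit] at *
    omega
  · rw [hout hv]; exact (hground v).trans (by omega)

open scoped Classical in
/-- The vertices of a finite set `D` which are not on its boundary. -/
noncomputable def bulk {D : Set V} (hD : D.Finite) : Finset V := {v ∈ hD.toFinset | v ∉ bdry D}

variable {D : Set V} {H : ℕ} {g h : V → ℤ}

lemma mem_bulk {hD : D.Finite} {v : V} : v ∈ bulk hD ↔ v ∈ D ∧ v ∉ bdry D := by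
  simp [bulk]

lemma nbrs_bulk_subset (hD : D.Finite) : nbrs (bulk hD) ⊆ hD.toFinset := by
  intro u hu
  obtain ⟨v, hv, huv⟩ := mem_nbrs.1 hu
  rw [mem_bulk] at hv
  rw [Set.Finite.mem_toFinset]
  by_contra huD
  exact hv.2 ⟨hv.1, u, huD, huv⟩

open scoped Classical in
lemma isHeight_piecewise_ground (hbdry : ∀ v ∈ bdry D, IsEvenV v) (hh : h ∈ Hom0 D) :
    IsHeight (D.piecewise h ground) where
  step u v huv := by
    have hexit {u v : V} (huv : adj u v) (hu : u ∈ D) (hv : v ∉ D) : h u = ground u := by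
      have hmem : u ∈ bdry D := ⟨hu, v, hv, huv.symm⟩
      rw [hh.2 u hmem, ground, if_pos (hbdry u hmem)]
    by_cases hu : u ∈ D <;> by_cases hv : v ∈ D <;> simp only [Set.piecewise, hu, hv, if_true,
      if_false]
    · have := hh.1.1 u v hu hv huv
      rw [Int.abs_eq_natAbs] at this
      exact_mod_cast this
    · rw [hexit huv hu hv]; exact isHeight_ground.step huv
    · rw [hexit huv.symm hv hu]; exact isHeight_ground.step huv
    · exact isHeight_ground.step huv
  parity v := by
    by_cases hv : v ∈ D <;> simp only [Set.piecewise, hv, if_true, if_false]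
    · have := Int.even_iff.1 (hh.1.2.1 v hv)
      rw [isEvenV_iff]; omega
    · exact isHeight_ground.parity v

open scoped Classical in
lemma isConfig_piecewise_ground (hD : D.Finite) (hbdry : ∀ v ∈ bdry D, IsEvenV v)
    (hH : ∀ h, IsHeight h → Set.EqOn h ground Dᶜ → ∀ v, (h v).natAbs ≤ H + 1)
    (hh : h ∈ Hom0 D) : IsConfig H (bulk hD) hD.toFinset (D.piecewise h ground) where
  toIsHeight := isHeight_piecewise_ground hbdry hh
  bound := hH _ (isHeight_piecewise_ground hbdry hh) (Set.piecewise_eqOn_compl D h ground)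
  even_eq_zero v hv hvE := by
    by_cases hvD : v ∈ D
    · rw [Set.piecewise_eq_of_mem _ _ _ hvD]
      exact hh.2 v (by_contra fun hvb => hvE (mem_bulk.2 ⟨hvD, hvb⟩))
    · rw [Set.piecewise_eq_of_notMem _ _ _ hvD, ground, if_pos hv]
  odd_eq_one v hv hvN := by
    rw [Set.piecewise_eq_of_notMem _ _ _ (by simpa using hvN), ground, if_neg hv]

lemma IsConfig.indicator_mem_hom0 (hD : D.Finite) (hbdry : ∀ v ∈ bdry D, IsEvenV v)
    (hg : IsConfig H (bulk hD) hD.toFinset g) : D.indicator g ∈ Hom0 D := by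
  refine ⟨⟨fun u v hu hv huv => ?_, fun v hv => ?_, fun v hv => ?_⟩, fun v hv => ?_⟩
  · rw [Set.indicator_of_mem hu, Set.indicator_of_mem hv, Int.abs_eq_natAbs]
    exact_mod_cast hg.step huv
  · have := hg.parity v
    rw [isEvenV_iff] at this
    rw [Set.indicator_of_mem hv, Int.even_iff]
    omega
  · exact Set.indicator_of_notMem hv g
  · rw [Set.indicator_of_mem hv.1]
    exact hg.even_eq_zero v (hbdry v hv) fun hvE => (mem_bulk.1 hvE).2 hv

lemma bijOn_indicator_hom0 (hD : D.Finite) (hbdry : ∀ v ∈ bdry D, IsEvenV v)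
    (hH : ∀ h, IsHeight h → Set.EqOn h ground Dᶜ → ∀ v, (h v).natAbs ≤ H + 1) :
    Set.BijOn D.indicator (configs H (bulk hD) hD.toFinset : Set (V → ℤ)) (Hom0 D) := by
  classical
  refine Set.InvOn.bijOn (f' := fun h => D.piecewise h ground) ⟨fun g hg => ?_, fun h hh => ?_⟩
    (fun g hg => (mem_configs.1 hg).indicator_mem_hom0 hD hbdry)
    fun h hh => mem_configs.2 (isConfig_piecewise_ground hD hbdry hH hh)
  · ext v
    by_cases hv : v ∈ D
    · simp [hv]
    · rw [(mem_configs.1 hg).eq_ground (by simp [mem_bulk, hv])]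
      exact Set.piecewise_eq_of_notMem _ _ _ hv
  · ext v
    by_cases hv : v ∈ D
    · simp [hv]
    · rw [Set.indicator_of_notMem hv, hh.1.2.2 v hv]

theorem exists_expec_sq_eq_cov (hD : D.Finite) (hbdry : ∀ v ∈ bdry D, IsEvenV v) {o : V}
    (ho : IsEvenV o) : ∃ H, expec (Hom0 D) (fun h => (h o : ℝ) ^ 2) = cov H (bulk hD) o o := by
  obtain ⟨H, hH⟩ := exists_forall_natAbs_le hD
  refine ⟨H, ?_⟩
  rw [expec_eq_expect (bijOn_indicator_hom0 hD hbdry hH), cov_eq_expect (nbrs_bulk_subset hD)]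
  refine Finset.expect_congr rfl fun g hg => ?_
  rw [evenHeight, if_pos ho, ← sq]
  by_cases hoD : o ∈ D
  · rw [Set.indicator_of_mem hoD]
  · rw [Set.indicator_of_notMem hoD,
      (mem_configs.1 hg).even_eq_zero o ho fun hoE => hoD (mem_bulk.1 hoE).1]

end EvenDomains

lemma finite_lamEven (m : ℤ) : (LamEven m).Finite := by
  refine (Set.finite_Icc ((-(m + 1), -(m + 1)) : V) (m + 1, m + 1)).subset fun v hv => ?_
  have hv : |v.1| ≤ m + 1 ∧ |v.2| ≤ m + 1 := by
    rcases hv with ⟨h1, h2⟩ | ⟨hv, -⟩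
    · exact ⟨h1.trans (by omega), h2.trans (by omega)⟩
    · exact max_le_iff.1 hv.le
  simp only [abs_le] at hv
  exact ⟨⟨hv.1.1, hv.2.1⟩, hv.1.2, hv.2.2⟩

lemma isEvenV_of_mem_bdry_lamEven {m : ℤ} {v : V} (hv : v ∈ bdry (LamEven m)) : IsEvenV v := by
  obtain ⟨hvD, u, hu, huv⟩ := hv
  simp only [LamEven, Lam, Lam2, infNorm, Set.mem_union, Set.mem_ofPred_eq, isEvenV_iff,
    Int.abs_eq_natAbs, adj] at *
  omega

theorem expec_sq_le_harmonic {D : Set V} (hD : D.Finite) (hbdry : ∀ v ∈ bdry D, IsEvenV v) {o : V}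
    (ho : IsEvenV o) {n : ℕ} (hn : o + (4 * (n : ℤ), 0) ∉ D) :
    expec (Hom0 D) (fun h => (h o : ℝ) ^ 2) ≤ 2048 * (harmonic n : ℝ) := by
  have hw : IsEvenV (o + (4 * (n : ℤ), 0)) := by
    simp only [isEvenV_iff, Prod.fst_add, Prod.snd_add] at *; omega
  obtain ⟨H, hH⟩ := exists_expec_sq_eq_cov hD hbdry ho
  calc expec (Hom0 D) (fun h => (h o : ℝ) ^ 2)
      = cov H (bulk hD) o o := hH
    _ ≤ 2 * energy H (unitCharge o - unitCharge (o + (4 * (n : ℤ), 0))) :=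
        cov_self_le_energy ho hw fun hmem => hn (mem_bulk.1 hmem).1
    _ ≤ 2048 * (harmonic n : ℝ) := by linarith [energy_unitCharge_sub_le (H := H) n ho]

theorem variance_upper_general : ∃ C : ℝ, 0 < C ∧ ∀ (D : Set V), D.Finite →
    (∀ v ∈ bdry D, IsEvenV v) → ∀ o, IsEvenV o → ∀ n : ℕ, 2 ≤ n → o + (4 * (n : ℤ), 0) ∉ D →
      expec (Hom0 D) (fun h => (h o : ℝ) ^ 2) ≤ C * Real.log n := by
  have hlog2 : 0 < Real.log 2 := Real.log_pos one_lt_two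
  refine ⟨2048 * (1 / Real.log 2 + 1), by positivity, fun D hD hbdry o ho n hn2 hn => ?_⟩
  have hlog : 1 ≤ 1 / Real.log 2 * Real.log n := by
    rw [one_div_mul_eq_div, one_le_div hlog2]
    exact Real.log_le_log two_pos (by exact_mod_cast hn2)
  calc expec (Hom0 D) (fun h => (h o : ℝ) ^ 2)
      ≤ 2048 * (harmonic n : ℝ) := expec_sq_le_harmonic hD hbdry ho hn
    _ ≤ 2048 * (1 + Real.log n) := by gcongr; exact harmonic_le_one_add_log n
    _ ≤ 2048 * (1 / Real.log 2 + 1) * Real.log n := by linarith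

lemma notMem_lamEven {n : ℕ} (hn : 2 ≤ n) : ((0, 0) + (4 * (n : ℤ), 0) : V) ∉ LamEven n := by
  simp only [LamEven, Lam, Lam2, infNorm, Set.mem_union, Set.mem_ofPred_eq, Int.abs_eq_natAbs,
    Prod.mk_add_mk]
  omega

/-- Logarithmic upper bound on the variance of the height at the origin. -/
theorem variance_upper : ∃ C : ℝ, 0 < C ∧ ∀ n : ℕ, 2 ≤ n →
    expec (Hom0 (LamEven (n : ℤ))) (fun h => (h ((0 : ℤ), (0 : ℤ)) : ℝ) ^ 2) ≤
      C * Real.log n := by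
  obtain ⟨C, hC, hle⟩ := variance_upper_general
  exact ⟨C, hC, fun n hn => hle _ (finite_lamEven n) (fun _ => isEvenV_of_mem_bdry_lamEven) (0, 0)
    (by decide) n hn (notMem_lamEven hn)⟩

end SquareIce
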